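/- Let α ∈ (0,1), δ > 0, K ≥ 0, and let p : [0,1] → ℝ be Lipschitz continuous with Lipschitz constant K and satisfy p(x) ≥ δ for all x ∈ [0,1]. Then there exist constants c′ > 0 and c̄ > 0, depending only on α, δ, K and sup|p|, such that for every pair (u,w) in the graph of the operator A = (d/dx)D^α one has Re ∫₀¹ (−p(x) w(x)) · conj(u(x)) dx ≥ c′ N_{(1+α)/2}(u)² − c̄ ‖u‖²_{L²(0,1)}. -/

import Mathlib

/-!
The inequality is a coercivity estimate for a non-local form, proved by a direct energy argument
rather than by interpolation or Fourier analysis.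

Since `p` is real, the real and imaginary parts of `u` can be treated separately, and `p` may be
extended to a Lipschitz function on the line. Let `U` be a real path with `U' = I^α ω` on `(0, 1)`
and `U(1) = 0`, continued by constants. For `h > 0` put `W_h(x) = h U(x) - ∫_{x-h}^x U` (`jump`),
which is the convolution of `U'` with the kernel `(h - s)₊`, and let `Φ_h` be the same
expression for `U²`. Differentiating `p U W_h - p Φ_h / 2` cancels the terms with `U'` except for
`(p U)' W_h`, and gives (`energy_identity`, `energy_le`)

  `δ / 2 ‖U - U(· - h)‖² ≤ ∫ (p U)' W_h + (K / 2) ∫ |Φ_h|`.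

The boundary term at `1` has a favourable sign because `U(1) = 0`, and at `0` everything vanishes
because `U` is constant to the left of `0`.

Now integrate against `h^(-2-α) dh` over `(0, ∞)`.

* The kernels `(h - s)₊` add up to a multiple of the Abel kernel `s^(-α)` (`superposition`), and by
  Abel's inversion formula (`abel_inversion`) that kernel maps `U' = I^α ω` to a multiple of the
  primitive of `ω`. An integration by parts turns the first term on the right into
  `formConst α * ∫ -p ω U` (`energy_form`). The case `p = 1` shows that the resulting energy
  `∫ h^(-2-α) ‖U - U(· - h)‖² dh` is finite (`integrableOn_energy`).
* The term with `Φ_h` is of lower order: for short shifts Young's inequality gains a factor `s`,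
  for long shifts only the `L²` norm and `U(0)²` enter, and `U(0)²` is itself bounded by a small
  multiple of the energy plus a multiple of the squared `L²` norm (`exists_initial_bound`). So the
  term can be absorbed (`exists_commutator_bound`).
* The energy dominates the Gagliardo seminorm of order `(1 + α) / 2` by the substitution
  `h = x - y` (`sobSeminormSq_le`).
-/

open MeasureTheory Set Filter

/-- Riemann–Liouville fractional integral `I^γ f` on `(0,1)` (complex-valued),
with the convention `I⁰ f = f`. -/
noncomputable def fracInt (γ : ℝ) (f : ℝ → ℂ) (x : ℝ) : ℂ :=
  if γ = 0 then f x
  else ((Real.Gamma γ)⁻¹ : ℝ) • ∫ p in (0:ℝ)..x, (((x - p) ^ (γ - 1) : ℝ) : ℂ) * f p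

/-- `f` is square integrable (and a.e. strongly measurable) on `(0,1)`: `f ∈ L²(0,1)`. -/
def SqIntOn (f : ℝ → ℂ) : Prop :=
  MeasureTheory.AEStronglyMeasurable f (MeasureTheory.volume.restrict (Set.Ioc (0:ℝ) 1)) ∧
  MeasureTheory.IntegrableOn (fun x => ‖f x‖ ^ 2) (Set.Ioc (0:ℝ) 1)

/-- `(u, w)` lies in the graph of `A = (d/dx) D^α`:  `u` is absolutely continuous on `[0,1]`
with `u' = I^α w` a.e., `u(1) = 0`, and `w ∈ L²(0,1)`; then `A u = w`. -/
def InGraphA (α : ℝ) (u w : ℝ → ℂ) : Prop :=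
  u 1 = 0 ∧ SqIntOn w ∧
  IntervalIntegrable (fracInt α w) MeasureTheory.volume 0 1 ∧
  ∀ x ∈ Set.Icc (0:ℝ) 1, u x = u 0 + ∫ t in (0:ℝ)..x, fracInt α w t

/-- Square of the `L²(0,1)` norm. -/
noncomputable def L2normSq (f : ℝ → ℂ) : ℝ := ∫ x in (0:ℝ)..1, ‖f x‖ ^ 2

/-- Square of the Gagliardo seminorm of order `s` on `(0,1)`. -/
noncomputable def sobSeminormSq (s : ℝ) (u : ℝ → ℂ) : ℝ :=
  ∫ x in (0:ℝ)..1, ∫ y in (0:ℝ)..1, ‖u x - u y‖ ^ 2 / |x - y| ^ (1 + 2 * s)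

/-- Square of the fractional Sobolev `H^s(0,1)` norm `N_s(u)`. -/
noncomputable def sobNormSq (s : ℝ) (u : ℝ → ℂ) : ℝ :=
  L2normSq u + sobSeminormSq s u

/-! ### Paths with integrable derivative -/

/-- `V` is the derivative of an absolutely continuous path on `[0,1]` that starts at `a` and ends
at `0`; `V` is extended by zero, so that the path is constant outside `[0,1]`. -/
structure IsPath (a : ℝ) (V : ℝ → ℝ) : Prop where
  integrable : Integrable V
  support : ∀ x, x ∉ Ioc (0:ℝ) 1 → V x = 0
  endpoint : a + ∫ t in (0:ℝ)..1, V t = 0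

/-- The path with initial value `a` and derivative `V`. -/
noncomputable def prim (a : ℝ) (V : ℝ → ℝ) (x : ℝ) : ℝ := a + ∫ t in (0:ℝ)..x, V t

namespace IsPath

variable {a : ℝ} {V : ℝ → ℝ}

lemma intervalIntegrable (hV : IsPath a V) (x y : ℝ) : IntervalIntegrable V volume x y :=
  hV.integrable.intervalIntegrable

lemma continuous (hV : IsPath a V) : Continuous (prim a V) :=
  continuous_const.add (intervalIntegral.continuous_primitive (fun x y => hV.intervalIntegrable x y) 0)

lemma prim_of_nonpos (hV : IsPath a V) {x : ℝ} (hx : x ≤ 0) : prim a V x = a := by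
  unfold prim
  rw [intervalIntegral.integral_zero_ae, add_zero]
  refine Eventually.of_forall fun t ht => hV.support t ?_
  rw [uIoc_of_ge hx] at ht
  exact fun h => absurd h.1 (not_lt.2 ht.2)

lemma prim_of_one_le (hV : IsPath a V) {x : ℝ} (hx : 1 ≤ x) : prim a V x = 0 := by
  unfold prim
  rw [← intervalIntegral.integral_add_adjacent_intervals (hV.intervalIntegrable 0 1)
    (hV.intervalIntegrable 1 x), ← add_assoc, hV.endpoint, zero_add]
  refine intervalIntegral.integral_zero_ae (Eventually.of_forall fun t ht => hV.support t ?_)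
  rw [uIoc_of_le hx] at ht
  exact fun h => absurd h.2 (not_le.2 ht.1)

lemma absCont (hV : IsPath a V) (x y : ℝ) : AbsolutelyContinuousOnInterval (prim a V) x y := by
  have h1 : AbsolutelyContinuousOnInterval (fun z => ∫ t in (0:ℝ)..z, V t) (min 0 (min x y))
      (max 0 (max x y)) :=
    (hV.intervalIntegrable _ _).absolutelyContinuousOnInterval_intervalIntegral
      (by rw [uIcc_of_le (by simp)]; simp)
  have h2 : AbsolutelyContinuousOnInterval (fun _ : ℝ => a) (min 0 (min x y))
      (max 0 (max x y)) := contDiffOn_const.absolutelyContinuousOnInterval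
  refine (h2.add h1).mono ?_
  rw [uIcc_of_le (a := min 0 (min x y)) (by simp)]
  exact Icc_subset_Icc (min_le_right _ _) (le_max_right _ _)

lemma ae_hasDerivAt (hV : IsPath a V) : ∀ᵐ x, HasDerivAt (prim a V) (V x) x := by
  filter_upwards [LocallyIntegrable.ae_hasDerivAt_integral hV.integrable.locallyIntegrable] with x hx
  exact (hx 0).const_add a

end IsPath

/-! ### The energy identity for the kernel `s ↦ (h - s)₊` -/

/-- The convolution of `f'` with the kernel `s ↦ (h - s)₊` on the half-line `s > 0`, written
without derivatives; it equals `∫ s in 0..h, (f x - f (x - s))`. -/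
noncomputable def jump (f : ℝ → ℝ) (h x : ℝ) : ℝ := h * f x - ∫ t in (x - h)..x, f t

/-- The squared `L²(0,1)` norm of the increment of `f` over steps of length `h`. -/
noncomputable def incr (f : ℝ → ℝ) (h : ℝ) : ℝ := ∫ x in (0:ℝ)..1, (f x - f (x - h)) ^ 2

lemma hasDerivAt_window {f : ℝ → ℝ} (hf : Continuous f) (h x : ℝ) :
    HasDerivAt (fun x => ∫ t in (x - h)..x, f t) (f x - f (x - h)) x := by
  have hF : ∀ y, HasDerivAt (fun y => ∫ t in (0:ℝ)..y, f t) (f y) y := fun y =>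
    intervalIntegral.integral_hasDerivAt_right (hf.intervalIntegrable _ _)
      (hf.stronglyMeasurableAtFilter _ _) hf.continuousAt
  have h2 := (hF x).sub ((hF (x - h)).comp x ((hasDerivAt_id x).sub_const h))
  rw [mul_one] at h2
  refine h2.congr_of_eventuallyEq (Eventually.of_forall fun y => ?_)
  simp only [Pi.sub_apply, Function.comp_apply, id]
  rw [intervalIntegral.integral_interval_sub_left (hf.intervalIntegrable _ _)
    (hf.intervalIntegrable _ _)]

lemma absCont_window {f : ℝ → ℝ} (hf : Continuous f) (h a b : ℝ) :
    AbsolutelyContinuousOnInterval (fun x => ∫ t in (x - h)..x, f t) a b := by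
  refine ContDiffOn.absolutelyContinuousOnInterval (ContDiff.contDiffOn ?_)
  rw [contDiff_one_iff_deriv]
  refine ⟨fun x => (hasDerivAt_window hf h x).differentiableAt, ?_⟩
  rw [show deriv (fun x => ∫ t in (x - h)..x, f t) = fun x => f x - f (x - h) from
    funext fun x => (hasDerivAt_window hf h x).deriv]
  fun_prop

lemma continuous_jump {f : ℝ → ℝ} (hf : Continuous f) (h : ℝ) : Continuous (jump f h) := by
  have : Continuous fun x => ∫ t in (x - h)..x, f t :=
    continuous_iff_continuousAt.2 fun x => (hasDerivAt_window hf h x).continuousAt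
  unfold jump
  fun_prop

lemma jump_eq_integral {f : ℝ → ℝ} (hf : Continuous f) (h x : ℝ) :
    jump f h x = ∫ s in (0:ℝ)..h, (f x - f (x - s)) := by
  rw [intervalIntegral.integral_sub (by simp)
    (Continuous.intervalIntegrable (by fun_prop) _ _)]
  simp [jump, intervalIntegral.integral_comp_sub_left]

namespace IsPath

variable {a : ℝ} {V : ℝ → ℝ}

lemma jump_sq_zero (hV : IsPath a V) {h : ℝ} (hh : 0 < h) (n : ℕ) :
    jump (fun x => prim a V x ^ n) h 0 = 0 := by
  unfold jump
  rw [intervalIntegral.integral_congr (g := fun _ => a ^ n)]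
  · simp [hV.prim_of_nonpos le_rfl]
  · intro x hx
    rw [uIcc_of_le (by linarith)] at hx
    simp [hV.prim_of_nonpos hx.2]

lemma jump_sq_one (hV : IsPath a V) {h : ℝ} (hh : 0 < h) :
    jump (fun x => prim a V x ^ 2) h 1 ≤ 0 := by
  have := intervalIntegral.integral_nonneg (μ := volume) (f := fun x => prim a V x ^ 2)
    (a := 1 - h) (b := 1) (by linarith) (fun x _ => sq_nonneg _)
  simp only [jump, hV.prim_of_one_le le_rfl]
  linarith

/-- The function `p u W - p Φ / 2`, with `W`, `Φ` the jump integrals of `u` and `u²`, has derivative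
`(p u)' W - p' Φ / 2 - p (u - u(· - h))² / 2`: the first-order terms in `u'` cancel. -/
lemma energy_identity (hV : IsPath a V) {p : ℝ → ℝ} {K : NNReal} (hp : LipschitzWith K p)
    {h : ℝ} (hh : 0 < h) :
    (∫ x in (0:ℝ)..1, deriv (fun y => p y * prim a V y) x * jump (prim a V) h x) =
      (1 / 2) * (∫ x in (0:ℝ)..1, p x * (prim a V x - prim a V (x - h)) ^ 2) +
      (1 / 2) * (∫ x in (0:ℝ)..1, deriv p x * jump (fun x => prim a V x ^ 2) h x) -
      (1 / 2) * (p 1 * jump (fun x => prim a V x ^ 2) h 1) := by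
  have hU := hV.continuous
  have hU2 : Continuous fun x => prim a V x ^ 2 := hU.pow 2
  have acU := hV.absCont 0 1
  have acp : AbsolutelyContinuousOnInterval p 0 1 :=
    (hp.lipschitzOnWith (s := uIcc 0 1)).absolutelyContinuousOnInterval
  have acU2 : AbsolutelyContinuousOnInterval (fun x => prim a V x ^ 2) 0 1 := by
    simpa only [sq] using acU.fun_mul acU
  have acW : AbsolutelyContinuousOnInterval (jump (prim a V) h) 0 1 :=
    (acU.const_mul h).fun_sub (absCont_window hU h 0 1)
  have acP : AbsolutelyContinuousOnInterval (jump (fun x => prim a V x ^ 2) h) 0 1 :=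
    (acU2.const_mul h).fun_sub (absCont_window hU2 h 0 1)
  have acg := acp.fun_mul acU
  have key := ((acg.fun_mul acW).fun_sub ((acp.fun_mul acP).const_mul (1 / 2))).integral_deriv_eq_sub
  have i1 : IntervalIntegrable (fun x => deriv (fun y => p y * prim a V y) x *
      jump (prim a V) h x) volume 0 1 :=
    acg.intervalIntegrable_deriv.mul_continuousOn (continuous_jump hU h).continuousOn
  have i2 : IntervalIntegrable (fun x => deriv p x * jump (fun x => prim a V x ^ 2) h x)
      volume 0 1 :=
    acp.intervalIntegrable_deriv.mul_continuousOn (continuous_jump hU2 h).continuousOn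
  have i3 : IntervalIntegrable (fun x => p x * (prim a V x - prim a V (x - h)) ^ 2)
      volume 0 1 := by
    have := hp.continuous
    exact Continuous.intervalIntegrable (by fun_prop) _ _
  have hcong : ∫ x in (0:ℝ)..1, deriv (fun x => p x * prim a V x * jump (prim a V) h x -
        1 / 2 * (p x * jump (fun x => prim a V x ^ 2) h x)) x =
      ∫ x in (0:ℝ)..1, (deriv (fun y => p y * prim a V y) x * jump (prim a V) h x -
        (1 / 2) * (deriv p x * jump (fun x => prim a V x ^ 2) h x)) -
        (1 / 2) * (p x * (prim a V x - prim a V (x - h)) ^ 2) := by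
    apply intervalIntegral.integral_congr_ae
    filter_upwards [hV.ae_hasDerivAt, hp.ae_differentiableAt_real] with x hx hpx _
    have d1 := hpx.hasDerivAt.fun_mul hx
    have d2 := (hx.const_mul h).fun_sub (hasDerivAt_window hU h x)
    have d3 := ((hx.fun_pow 2).const_mul h).fun_sub (hasDerivAt_window hU2 h x)
    have d4 := (d1.fun_mul d2).fun_sub ((hpx.hasDerivAt.fun_mul d3).const_mul (1 / 2))
    rw [d1.deriv]
    refine d4.deriv.trans ?_
    simp only [jump]
    push_cast
    ring
  rw [intervalIntegral.integral_sub (i1.sub (i2.const_mul _)) (i3.const_mul _),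
    intervalIntegral.integral_sub i1 (i2.const_mul _), intervalIntegral.integral_const_mul,
    intervalIntegral.integral_const_mul] at hcong
  rw [hcong] at key
  have z1 := hV.jump_sq_zero hh 1
  have z2 := hV.jump_sq_zero hh 2
  simp only [pow_one] at z1
  simp only [z2, hV.prim_of_one_le le_rfl] at key
  have z1' : jump (prim a V) h 0 = 0 := z1
  rw [z1'] at key
  linarith

/-- The one-sided boundary term has a favourable sign, and the derivative of the weight costs only
the total variation of the jump integral of `u²`. -/
lemma energy_le (hV : IsPath a V) {p : ℝ → ℝ} {K : NNReal} (hp : LipschitzWith K p) {δ : ℝ}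
    (hδ : 0 < δ) (hpδ : ∀ x ∈ Icc (0:ℝ) 1, δ ≤ p x) {h : ℝ} (hh : 0 < h) :
    δ / 2 * incr (prim a V) h ≤
      (∫ x in (0:ℝ)..1, deriv (fun y => p y * prim a V y) x * jump (prim a V) h x) +
      K / 2 * ∫ x in (0:ℝ)..1, |jump (fun x => prim a V x ^ 2) h x| := by
  have hU := hV.continuous
  have hU2 : Continuous fun x => prim a V x ^ 2 := hU.pow 2
  have hpc := hp.continuous
  have acp : AbsolutelyContinuousOnInterval p 0 1 :=
    (hp.lipschitzOnWith (s := uIcc 0 1)).absolutelyContinuousOnInterval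
  rw [hV.energy_identity hp hh]
  have e1 : δ * incr (prim a V) h ≤
      ∫ x in (0:ℝ)..1, p x * (prim a V x - prim a V (x - h)) ^ 2 := by
    rw [incr, ← intervalIntegral.integral_const_mul]
    refine intervalIntegral.integral_mono_on zero_le_one
      (Continuous.intervalIntegrable (by fun_prop) _ _)
      (Continuous.intervalIntegrable (by fun_prop) _ _) fun x hx => ?_
    exact mul_le_mul_of_nonneg_right (hpδ x hx) (sq_nonneg _)
  have e2 : -(K * ∫ x in (0:ℝ)..1, |jump (fun x => prim a V x ^ 2) h x|) ≤
      ∫ x in (0:ℝ)..1, deriv p x * jump (fun x => prim a V x ^ 2) h x := by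
    rw [← intervalIntegral.integral_const_mul, ← intervalIntegral.integral_neg]
    have hc := continuous_jump hU2 h
    refine intervalIntegral.integral_mono_on zero_le_one
      (Continuous.intervalIntegrable (by fun_prop) _ _)
      (acp.intervalIntegrable_deriv.mul_continuousOn hc.continuousOn) fun x hx => ?_
    have h1 : |deriv p x| ≤ K := norm_deriv_le_of_lipschitz hp
    have h2 : |deriv p x * jump (fun x => prim a V x ^ 2) h x| ≤
        K * |jump (fun x => prim a V x ^ 2) h x| := by
      rw [abs_mul]
      exact mul_le_mul_of_nonneg_right h1 (abs_nonneg _)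
    exact (abs_le.1 h2).1
  have e3 : p 1 * jump (fun x => prim a V x ^ 2) h 1 ≤ 0 :=
    mul_nonpos_of_nonneg_of_nonpos (hδ.le.trans (hpδ 1 (by simp))) (hV.jump_sq_one hh)
  linarith

end IsPath

/-! ### Superposition of the kernels `(h - s)₊` into the Abel kernel -/

/-- The Abel kernel `(x - t)^(-α)`, cut off to `t < x`. -/
noncomputable def abelKer (α x t : ℝ) : ℝ := if t < x then (x - t) ^ (-α) else 0

lemma measurable_abelKer (α : ℝ) : Measurable fun z : ℝ × ℝ => abelKer α z.1 z.2 :=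
  Measurable.ite (measurableSet_lt measurable_snd measurable_fst)
    ((measurable_fst.sub measurable_snd).pow_const _) measurable_const

/-- `∫₀^∞ h^(-2-α) (h - s)₊ dh = s^(-α) / (α (1 + α))`. -/
lemma integral_hinge {α s : ℝ} (hα : 0 < α) (hs : 0 < s) :
    IntegrableOn (fun h : ℝ => h ^ (-2 - α) * max (h - s) 0) (Ioi 0) ∧
    ∫ h in Ioi (0:ℝ), h ^ (-2 - α) * max (h - s) 0 = s ^ (-α) / (α * (1 + α)) := by
  have e : EqOn (fun h : ℝ => h ^ (-2 - α) * max (h - s) 0)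
      ((Ioi s).indicator fun h => h ^ (-1 - α) - s * h ^ (-2 - α)) (Ioi 0) := by
    intro h hh
    have hh : 0 < h := hh
    by_cases hs' : s < h
    · rw [indicator_of_mem (show h ∈ Ioi s from hs')]
      simp only
      rw [max_eq_left (by linarith), show (-1 - α) = (-2 - α) + 1 by ring, Real.rpow_add_one hh.ne']
      ring
    · rw [indicator_of_notMem (show h ∉ Ioi s from hs')]
      simp only
      rw [max_eq_right (by linarith), mul_zero]
  have i1 : IntegrableOn (fun h : ℝ => h ^ (-1 - α)) (Ioi s) :=
    integrableOn_Ioi_rpow_of_lt (by linarith) hs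
  have i2 : IntegrableOn (fun h : ℝ => s * h ^ (-2 - α)) (Ioi s) :=
    (integrableOn_Ioi_rpow_of_lt (by linarith) hs).const_mul s
  have hsub : Ioi s ∩ Ioi (0:ℝ) = Ioi s := inter_eq_left.2 (Ioi_subset_Ioi hs.le)
  constructor
  · rw [integrableOn_congr_fun e measurableSet_Ioi, IntegrableOn,
      integrable_indicator_iff measurableSet_Ioi, IntegrableOn,
      Measure.restrict_restrict measurableSet_Ioi, hsub]
    exact i1.sub i2
  · rw [setIntegral_congr_fun measurableSet_Ioi e, integral_indicator measurableSet_Ioi,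
      Measure.restrict_restrict measurableSet_Ioi, hsub, integral_sub i1 i2, integral_const_mul,
      integral_Ioi_rpow_of_lt (by linarith) hs, integral_Ioi_rpow_of_lt (by linarith) hs,
      show (-1 - α + 1) = -α by ring, show (-2 - α + 1) = -α - 1 by ring,
      Real.rpow_sub_one hs.ne']
    have h1 : (1 + α) ≠ 0 := by linarith
    have h2 : (-α - 1) ≠ 0 := by linarith
    field_simp
    ring

namespace IsPath

variable {a : ℝ} {V : ℝ → ℝ}

/-- Integration by parts moves the derivative in `jump` onto the kernel `s ↦ (h - s)₊`. -/
lemma jump_eq_hinge (hV : IsPath a V) {h : ℝ} (hh : 0 < h) (x : ℝ) :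
    jump (prim a V) h x = ∫ t, (if t < x then max (h - (x - t)) 0 else 0) * V t := by
  have ac1 : AbsolutelyContinuousOnInterval (fun t : ℝ => t - (x - h)) (x - h) x :=
    ContDiffOn.absolutelyContinuousOnInterval (ContDiff.contDiffOn (by fun_prop))
  have key := ac1.integral_mul_deriv_eq_deriv_mul (hV.absCont (x - h) x)
  have e1 : ∫ t, (if t < x then max (h - (x - t)) 0 else 0) * V t =
      ∫ t in (x - h)..x, (t - (x - h)) * deriv (prim a V) t := by
    rw [intervalIntegral.integral_of_le (by linarith), integral_Ioc_eq_integral_Ioo,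
      ← integral_indicator measurableSet_Ioo]
    refine integral_congr_ae ?_
    filter_upwards [hV.ae_hasDerivAt] with t ht
    by_cases h1 : t < x
    · by_cases h2 : x - h < t
      · rw [indicator_of_mem (show t ∈ Ioo (x - h) x from ⟨h2, h1⟩), if_pos h1,
          max_eq_left (by linarith), ht.deriv]
        ring
      · rw [indicator_of_notMem (fun h3 => h2 h3.1), if_pos h1, max_eq_right (by linarith),
          zero_mul]
    · rw [indicator_of_notMem (fun h3 => h1 h3.2), if_neg h1, zero_mul]
  rw [e1, key, jump]
  have e2 : ∀ t : ℝ, deriv (fun t : ℝ => t - (x - h)) t = 1 := fun t => by simp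
  simp only [e2]
  simp

/-- Fubini's theorem: superposing the kernels `(h - s)₊` with the weights `h^(-2-α)` gives a
multiple of the Abel kernel. -/
lemma superposition (hV : IsPath a V) {α : ℝ} (hα : 0 < α) {G : ℝ → ℝ} (hG : Integrable G)
    (hG0 : ∀ x, x ∉ Ioc (0:ℝ) 1 → G x = 0) {B : ℝ}
    (hB : ∀ᵐ x, x ∈ Ioc (0:ℝ) 1 → Integrable (fun t => abelKer α x t * V t) ∧
      ∫ t, |abelKer α x t * V t| ≤ B) :
    IntegrableOn (fun h : ℝ => h ^ (-2 - α) * ∫ x in (0:ℝ)..1, G x * jump (prim a V) h x) (Ioi 0) ∧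
    α * (1 + α) * ∫ h in Ioi (0:ℝ), h ^ (-2 - α) * ∫ x in (0:ℝ)..1, G x * jump (prim a V) h x =
      ∫ x in (0:ℝ)..1, G x * ∫ t, abelKer α x t * V t := by
  have hα' : α * (1 + α) ≠ 0 := by positivity
  have hmVG : AEStronglyMeasurable (fun z : ℝ × ℝ => V z.2 * G z.1)
      ((volume : Measure ℝ).prod volume) :=
    hV.integrable.aestronglyMeasurable.comp_snd.mul hG.aestronglyMeasurable.comp_fst
  have hmk : AEStronglyMeasurable (fun z : ℝ × ℝ => abelKer α z.1 z.2 * (V z.2 * G z.1))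
      ((volume : Measure ℝ).prod volume) :=
    (measurable_abelKer α).aestronglyMeasurable.mul hmVG
  have hk : Integrable (fun z : ℝ × ℝ => abelKer α z.1 z.2 * (V z.2 * G z.1))
      ((volume : Measure ℝ).prod volume) := by
    rw [integrable_prod_iff hmk]
    constructor
    · filter_upwards [hB] with x hx
      by_cases h1 : x ∈ Ioc (0:ℝ) 1
      · refine ((hx h1).1.mul_const (G x)).congr (Eventually.of_forall fun t => ?_)
        simp only
        ring
      · simp [hG0 x h1]
    · refine (hG.norm.const_mul B).mono' hmk.norm.integral_prod_right' ?_
      filter_upwards [hB] with x hx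
      by_cases h1 : x ∈ Ioc (0:ℝ) 1
      · have : ∫ t, ‖abelKer α x t * (V t * G x)‖ = (∫ t, |abelKer α x t * V t|) * ‖G x‖ := by
          rw [← integral_mul_const]
          refine integral_congr_ae (Eventually.of_forall fun t => ?_)
          simp only [← mul_assoc, norm_mul _ (G x), Real.norm_eq_abs (_ * _)]
        rw [Real.norm_of_nonneg (integral_nonneg fun t => norm_nonneg _), this]
        exact mul_le_mul_of_nonneg_right (hx h1).2 (norm_nonneg _)
      · simp [hG0 x h1]
  let m : ℝ × ℝ → ℝ → ℝ := fun z h => if z.2 < z.1 then max (h - (z.1 - z.2)) 0 else 0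
  let F : ℝ × ℝ → ℝ → ℝ := fun z h => h ^ (-2 - α) * m z h * (V z.2 * G z.1)
  have hm : Measurable fun y : (ℝ × ℝ) × ℝ => m y.1 y.2 :=
    Measurable.ite (measurableSet_lt (by fun_prop) (by fun_prop)) (by fun_prop) measurable_const
  have hsec : ∀ z : ℝ × ℝ, IntegrableOn (fun h : ℝ => h ^ (-2 - α) * m z h) (Ioi 0) ∧
      ∫ h in Ioi (0:ℝ), h ^ (-2 - α) * m z h = abelKer α z.1 z.2 / (α * (1 + α)) := by
    intro z
    by_cases hz : z.2 < z.1
    · have := integral_hinge hα (sub_pos.2 hz)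
      simpa only [m, abelKer, if_pos hz] using this
    · simp [m, abelKer, hz]
  have hmF : AEStronglyMeasurable (Function.uncurry F)
      (((volume : Measure ℝ).prod volume).prod (volume.restrict (Ioi (0:ℝ)))) := by
    have h1 : Measurable fun y : (ℝ × ℝ) × ℝ => y.2 ^ (-2 - α) := measurable_snd.pow_const _
    exact (h1.mul hm).aestronglyMeasurable.mul hmVG.comp_fst
  have hF : Integrable (Function.uncurry F)
      (((volume : Measure ℝ).prod volume).prod (volume.restrict (Ioi (0:ℝ)))) := by
    rw [integrable_prod_iff hmF]
    constructor
    · exact Eventually.of_forall fun z => (hsec z).1.mul_const (V z.2 * G z.1)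
    · refine (hk.norm.div_const (α * (1 + α))).congr (Eventually.of_forall fun z => ?_)
      have h1 : ∀ h ∈ Ioi (0:ℝ), ‖Function.uncurry F (z, h)‖ =
          h ^ (-2 - α) * m z h * ‖V z.2 * G z.1‖ := by
        intro h hh
        have h2 : 0 ≤ h ^ (-2 - α) * m z h := by
          refine mul_nonneg (Real.rpow_nonneg (le_of_lt hh) _) ?_
          simp only [m]
          split_ifs
          exacts [le_max_right _ _, le_rfl]
        simp only [Function.uncurry, F]
        rw [norm_mul, Real.norm_of_nonneg h2]
      have h3 : 0 ≤ abelKer α z.1 z.2 := by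
        unfold abelKer
        split_ifs with h4
        exacts [Real.rpow_nonneg (sub_pos.2 h4).le _, le_rfl]
      beta_reduce
      rw [setIntegral_congr_fun measurableSet_Ioi h1, integral_mul_const, (hsec z).2]
      rw [norm_mul, Real.norm_of_nonneg h3]
      ring
  have hR : ∀ᵐ h ∂(volume.restrict (Ioi (0:ℝ))), ∫ z, F z h ∂((volume : Measure ℝ).prod volume) =
      h ^ (-2 - α) * ∫ x in (0:ℝ)..1, G x * jump (prim a V) h x := by
    filter_upwards [hF.prod_left_ae, ae_restrict_mem measurableSet_Ioi] with h hi hh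
    have hi' : Integrable (fun z => F z h) ((volume : Measure ℝ).prod volume) := hi
    rw [integral_prod _ hi', intervalIntegral.integral_of_le zero_le_one,
      ← setIntegral_eq_integral_of_forall_compl_eq_zero (s := Ioc (0:ℝ) 1),
      ← integral_const_mul]
    · refine integral_congr_ae (Eventually.of_forall fun x => ?_)
      simp only
      rw [hV.jump_eq_hinge hh, ← integral_const_mul, ← integral_const_mul]
      refine integral_congr_ae (Eventually.of_forall fun t => ?_)
      simp only [F, m]
      ring
    · intro x hx
      simp [F, hG0 x hx]
  refine ⟨hF.integral_prod_right.congr hR, ?_⟩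
  rw [← integral_congr_ae hR, ← integral_integral_swap hF]
  have e1 : ∀ z : ℝ × ℝ, ∫ h in Ioi (0:ℝ), F z h =
      abelKer α z.1 z.2 * (V z.2 * G z.1) / (α * (1 + α)) := by
    intro z
    simp only [F]
    rw [integral_mul_const, (hsec z).2]
    ring
  simp only [e1]
  rw [integral_div, mul_div_cancel₀ _ hα', integral_prod _ hk,
    intervalIntegral.integral_of_le zero_le_one,
    ← setIntegral_eq_integral_of_forall_compl_eq_zero (s := Ioc (0:ℝ) 1)]
  · refine integral_congr_ae (Eventually.of_forall fun x => ?_)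
    simp only
    rw [← integral_const_mul]
    refine integral_congr_ae (Eventually.of_forall fun t => ?_)
    simp only
    ring
  · intro x hx
    simp [hG0 x hx]

end IsPath

/-! ### Abel inversion -/

/-- The truncated power `s^(-β)` on `(0, 1]`, extended by zero. -/
noncomputable def cutPow (β : ℝ) : ℝ → ℝ := (Ioc (0:ℝ) 1).indicator fun s => s ^ (-β)

/-- The constant `B(α, 1 - α) = ∫₀¹ r^(α-1) (1-r)^(-α) dr`. -/
noncomputable def abelConst (α : ℝ) : ℝ := ∫ r in (0:ℝ)..1, r ^ (α - 1) * (1 - r) ^ (-α)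

/-- The fractional integral `I^α ω` on `(0, 1]` without the factor `1 / Γ(α)`, extended by zero. -/
noncomputable def rlInt (α : ℝ) (ω : ℝ → ℝ) : ℝ → ℝ :=
  (Ioc (0:ℝ) 1).indicator fun x => ∫ p, abelKer (1 - α) x p * ω p

lemma integrable_cutPow {β : ℝ} (hβ : β < 1) : Integrable (cutPow β) := by
  have h := intervalIntegral.intervalIntegrable_rpow' (a := 0) (b := 1) (show -1 < -β by linarith)
  rw [intervalIntegrable_iff_integrableOn_Ioc_of_le zero_le_one] at h
  exact h.integrable_indicator measurableSet_Ioc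

lemma cutPow_nonneg (β s : ℝ) : 0 ≤ cutPow β s :=
  indicator_nonneg (fun _ hs => Real.rpow_nonneg hs.1.le _) s

lemma abelKer_mul_eq (β : ℝ) {f : ℝ → ℝ} (hf : ∀ x ∉ Ioc (0:ℝ) 1, f x = 0) {x : ℝ}
    (hx : x ∈ Ioc (0:ℝ) 1) (t : ℝ) : abelKer β x t * f t = f t * cutPow β (x - t) := by
  by_cases ht : t ∈ Ioc (0:ℝ) 1
  · unfold abelKer cutPow
    by_cases htx : t < x
    · rw [if_pos htx, indicator_of_mem (show x - t ∈ Ioc (0:ℝ) 1 from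
        ⟨by linarith, by linarith [hx.2, ht.1]⟩),
        mul_comm]
    · rw [if_neg htx, indicator_of_notMem (fun h : x - t ∈ Ioc (0:ℝ) 1 => htx (by linarith [h.1])),
        mul_comm]
  · rw [hf t ht, mul_zero, zero_mul]

lemma intervalIntegrable_abelConst {α : ℝ} (hα : α ∈ Ioo (0:ℝ) 1) :
    IntervalIntegrable (fun r : ℝ => r ^ (α - 1) * (1 - r) ^ (-α)) volume 0 1 := by
  have h := Complex.betaIntegral_convergent (u := (α : ℂ)) (v := ((1 - α : ℝ) : ℂ))
    (by simpa using hα.1) (by simpa using hα.2)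
  rw [intervalIntegrable_iff_integrableOn_Ioo_of_le zero_le_one] at h ⊢
  refine (integrableOn_congr_fun (fun r hr => ?_) measurableSet_Ioo).1 h.re
  have e1 : ((r:ℝ):ℂ) ^ ((α:ℂ) - 1) = ((r ^ (α - 1) : ℝ) : ℂ) := by
    rw [Complex.ofReal_cpow hr.1.le]; push_cast; rfl
  have e2 : (1 - ((r:ℝ):ℂ)) ^ (((1 - α : ℝ) : ℂ) - 1) = (((1 - r) ^ (-α) : ℝ) : ℂ) := by
    rw [Complex.ofReal_cpow (by linarith [hr.2])]; push_cast; congr 1; ring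
  rw [e1, e2, ← Complex.ofReal_mul]
  rfl

lemma abelConst_pos {α : ℝ} (hα : α ∈ Ioo (0:ℝ) 1) : 0 < abelConst α :=
  intervalIntegral.intervalIntegral_pos_of_pos_on (intervalIntegrable_abelConst hα)
    (fun r hr => mul_pos (Real.rpow_pos_of_pos hr.1 _)
      (Real.rpow_pos_of_pos (by linarith [hr.2]) _)) one_pos

open scoped Convolution in
/-- The kernels `s^(α-1)` and `s^(-α)` convolve to a constant on `(0, 1)`, by scaling. The cut-off at
`1` is invisible for arguments below `1`. -/
lemma conv_cutPow {α : ℝ} {y : ℝ} (hy : y < 1) :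
    (cutPow (1 - α) ⋆[ContinuousLinearMap.mul ℝ ℝ, volume] cutPow α) y =
      if 0 < y then abelConst α else 0 := by
  rw [convolution_def]
  simp only [ContinuousLinearMap.mul_apply']
  split_ifs with h0
  · have e1 : ∀ t, t ∉ ({y} : Set ℝ) → cutPow (1 - α) t * cutPow α (y - t) =
        (Ioc (0:ℝ) y).indicator (fun t => t ^ (α - 1) * (y - t) ^ (-α)) t := by
      intro t hty
      have hty : t ≠ y := hty
      unfold cutPow
      by_cases ht : t ∈ Ioc 0 y
      · rw [indicator_of_mem ht, indicator_of_mem (show t ∈ Ioc (0:ℝ) 1 from ⟨ht.1, by linarith [ht.2]⟩),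
          indicator_of_mem (show y - t ∈ Ioc (0:ℝ) 1 from
            ⟨by linarith [lt_of_le_of_ne ht.2 hty], by linarith [ht.1]⟩), neg_sub]
      · rw [indicator_of_notMem ht]
        by_cases ht0 : 0 < t
        · rw [indicator_of_notMem (fun h : y - t ∈ Ioc (0:ℝ) 1 => ht ⟨ht0, by linarith [h.1]⟩),
            mul_zero]
        · rw [indicator_of_notMem (fun h : t ∈ Ioc (0:ℝ) 1 => ht0 h.1), zero_mul]
    have e2 : ∫ t, cutPow (1 - α) t * cutPow α (y - t) =
        ∫ t in (0:ℝ)..y, t ^ (α - 1) * (y - t) ^ (-α) := by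
      rw [intervalIntegral.integral_of_le h0.le, ← integral_indicator measurableSet_Ioc]
      refine integral_congr_ae ?_
      have : ∀ᵐ t : ℝ, t ∉ ({y} : Set ℝ) := measure_eq_zero_iff_ae_notMem.1 (by simp)
      filter_upwards [this] with t ht using e1 t ht
    rw [e2, abelConst]
    have := intervalIntegral.mul_integral_comp_mul_left (a := 0) (b := 1)
      (f := fun t : ℝ => t ^ (α - 1) * (y - t) ^ (-α)) (c := y)
    rw [mul_zero, mul_one] at this
    rw [← this, ← intervalIntegral.integral_const_mul]
    rw [intervalIntegral.integral_of_le zero_le_one, intervalIntegral.integral_of_le zero_le_one]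
    refine setIntegral_congr_fun measurableSet_Ioc fun r hr => ?_
    rw [show y - y * r = y * (1 - r) by ring, Real.mul_rpow h0.le hr.1.le,
      Real.mul_rpow h0.le (by linarith [hr.2])]
    have : y * (y ^ (α - 1) * y ^ (-α)) = 1 := by
      rw [← Real.rpow_add h0, show α - 1 + -α = -1 by ring, Real.rpow_neg_one,
        mul_inv_cancel₀ h0.ne']
    linear_combination (r ^ (α - 1) * (1 - r) ^ (-α)) * this
  · refine integral_eq_zero_of_ae (ae_of_all _ fun t => ?_)
    unfold cutPow
    by_cases ht0 : 0 < t
    · simp only [Pi.zero_apply]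
      rw [indicator_of_notMem (s := Ioc (0:ℝ) 1) (a := y - t)
        (fun h : y - t ∈ Ioc (0:ℝ) 1 => h0 (by linarith [h.1])), mul_zero]
    · simp only [Pi.zero_apply]
      rw [indicator_of_notMem (fun h : t ∈ Ioc (0:ℝ) 1 => ht0 h.1), zero_mul]

lemma ae_integrable_abelKer_mul {β : ℝ} (hβ : β < 1) {ω : ℝ → ℝ} (hω : Integrable ω)
    (hω0 : ∀ x ∉ Ioc (0:ℝ) 1, ω x = 0) :
    ∀ᵐ x : ℝ, x ∈ Ioc (0:ℝ) 1 → Integrable fun p => abelKer β x p * ω p := by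
  filter_upwards [hω.ae_convolution_exists (ContinuousLinearMap.mul ℝ ℝ)
    (integrable_cutPow hβ)] with x hx hx1
  have := hx.integrable
  simp only [ContinuousLinearMap.mul_apply'] at this
  exact this.congr (ae_of_all _ fun t => (abelKer_mul_eq β hω0 hx1 t).symm)

open scoped Convolution in
lemma rlInt_eq_conv {α : ℝ} {ω : ℝ → ℝ} (hω0 : ∀ x ∉ Ioc (0:ℝ) 1, ω x = 0) {x : ℝ}
    (hx : x ∈ Ioc (0:ℝ) 1) :
    rlInt α ω x = (ω ⋆[ContinuousLinearMap.mul ℝ ℝ, volume] cutPow (1 - α)) x := by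
  rw [rlInt, indicator_of_mem hx, convolution_def]
  exact integral_congr_ae (ae_of_all _ fun t => abelKer_mul_eq (1 - α) hω0 hx t)

lemma rlInt_zero (α : ℝ) (ω : ℝ → ℝ) : ∀ x ∉ Ioc (0:ℝ) 1, rlInt α ω x = 0 :=
  fun _ hx => indicator_of_notMem hx _

open scoped Convolution in
lemma integrable_rlInt {α : ℝ} (hα : 0 < α) {ω : ℝ → ℝ} (hω : Integrable ω)
    (hω0 : ∀ x ∉ Ioc (0:ℝ) 1, ω x = 0) : Integrable (rlInt α ω) := by
  have h := (hω.integrable_convolution (ContinuousLinearMap.mul ℝ ℝ)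
    (integrable_cutPow (show 1 - α < 1 by linarith))).indicator (measurableSet_Ioc (a := 0) (b := 1))
  refine h.congr (ae_of_all _ fun x => ?_)
  by_cases hx : x ∈ Ioc (0:ℝ) 1
  · rw [indicator_of_mem hx, rlInt_eq_conv hω0 hx]
  · rw [indicator_of_notMem hx, rlInt_zero _ _ _ hx]

open scoped Convolution in
/-- Abel's inversion formula: the kernel `(x - t)^(-α)` turns `I^α ω` into a multiple of the
primitive of `ω`, because the convolution of the two kernels is the constant `B(α, 1 - α)`. -/
lemma abel_inversion {α : ℝ} (hα : α ∈ Ioo (0:ℝ) 1) {ω : ℝ → ℝ} (hω : Integrable ω)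
    (hω0 : ∀ x ∉ Ioc (0:ℝ) 1, ω x = 0) :
    ∀ᵐ x : ℝ, x ∈ Ioc (0:ℝ) 1 → Integrable (fun t => abelKer α x t * rlInt α ω t) ∧
      ∫ t, abelKer α x t * rlInt α ω t = abelConst α * ∫ t in (0:ℝ)..x, ω t := by
  have k1 := integrable_cutPow (show 1 - α < 1 by linarith [hα.1])
  have k2 := integrable_cutPow hα.2
  have a1 := hω.ae_convolution_exists (ContinuousLinearMap.mul ℝ ℝ) k1
  have a2 := k1.norm.ae_convolution_exists (ContinuousLinearMap.mul ℝ ℝ) k2.norm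
  have a3 := hω.norm.ae_convolution_exists (ContinuousLinearMap.mul ℝ ℝ)
    (k1.norm.integrable_convolution (ContinuousLinearMap.mul ℝ ℝ) k2.norm)
  filter_upwards [a3, ae_integrable_abelKer_mul hα.2 (integrable_rlInt hα.1 hω hω0)
    (rlInt_zero α ω)] with x h3 h4 hx
  refine ⟨h4 hx, ?_⟩
  have assoc := convolution_assoc (ContinuousLinearMap.mul ℝ ℝ) (ContinuousLinearMap.mul ℝ ℝ)
    (ContinuousLinearMap.mul ℝ ℝ) (ContinuousLinearMap.mul ℝ ℝ)
    (fun x y z => by simp [mul_assoc]) hω.aestronglyMeasurable k1.aestronglyMeasurable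
    k2.aestronglyMeasurable a1 a2 h3
  have e1 : ∫ t, abelKer α x t * rlInt α ω t =
      ((ω ⋆[ContinuousLinearMap.mul ℝ ℝ, volume] cutPow (1 - α))
        ⋆[ContinuousLinearMap.mul ℝ ℝ, volume] cutPow α) x := by
    rw [convolution_def]
    refine integral_congr_ae (ae_of_all _ fun t => ?_)
    simp only [ContinuousLinearMap.mul_apply']
    by_cases ht : t ∈ Ioc (0:ℝ) 1
    · rw [abelKer_mul_eq α (rlInt_zero α ω) hx, rlInt_eq_conv hω0 ht]
    · rw [rlInt_zero _ _ _ ht, mul_zero]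
      by_cases ht0 : 0 < t
      · have : cutPow α (x - t) = 0 := indicator_of_notMem
          (fun h : x - t ∈ Ioc (0:ℝ) 1 => ht ⟨ht0, by linarith [h.1, hx.2]⟩) _
        rw [this, mul_zero]
      · have : (ω ⋆[ContinuousLinearMap.mul ℝ ℝ, volume] cutPow (1 - α)) t = 0 := by
          rw [convolution_def]
          refine integral_eq_zero_of_ae (ae_of_all _ fun r => ?_)
          simp only [ContinuousLinearMap.mul_apply', Pi.zero_apply]
          by_cases hr : r ∈ Ioc (0:ℝ) 1
          · have : cutPow (1 - α) (t - r) = 0 := indicator_of_notMem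
              (fun h : t - r ∈ Ioc (0:ℝ) 1 => ht0 (by linarith [h.1, hr.1])) _
            rw [this, mul_zero]
          · rw [hω0 r hr, zero_mul]
        rw [this, zero_mul]
  rw [e1, assoc, convolution_def, intervalIntegral.integral_of_le hx.1.le, ← integral_const_mul,
    integral_Ioc_eq_integral_Ioo, ← integral_indicator measurableSet_Ioo]
  refine integral_congr_ae (ae_of_all _ fun t => ?_)
  simp only [ContinuousLinearMap.mul_apply']
  by_cases ht : t ∈ Ioc (0:ℝ) 1
  · rw [conv_cutPow (by linarith [ht.1, hx.2])]
    by_cases htx : t < x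
    · rw [if_pos (by linarith), indicator_of_mem (show t ∈ Ioo 0 x from ⟨ht.1, htx⟩), mul_comm]
    · rw [if_neg (by linarith), indicator_of_notMem (fun h : t ∈ Ioo 0 x => htx h.2), mul_zero]
  · rw [hω0 t ht, zero_mul]
    by_cases h : t ∈ Ioo 0 x
    · rw [indicator_of_mem h, hω0 t ht, mul_zero]
    · rw [indicator_of_notMem h]

lemma abs_rlInt_le (α : ℝ) (ω : ℝ → ℝ) (x : ℝ) : |rlInt α ω x| ≤ rlInt α (fun t => |ω t|) x := by
  by_cases hx : x ∈ Ioc (0:ℝ) 1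
  · rw [rlInt, rlInt, indicator_of_mem hx, indicator_of_mem hx]
    refine (abs_integral_le_integral_abs).trans (le_of_eq (integral_congr_ae (ae_of_all _ fun t => ?_)))
    simp only
    rw [abs_mul, abs_of_nonneg]
    unfold abelKer
    split_ifs with h
    · exact Real.rpow_nonneg (by linarith) _
    · exact le_rfl
  · rw [rlInt_zero _ _ _ hx, rlInt_zero _ _ _ hx, abs_zero]

/-! ### The fractional equation and its energy -/

/-- `prim a V` with `V = I^α ω` solves the fractional equation with datum `ω` on `[0,1]` and
vanishes at `1`. -/
structure IsSol (α a : ℝ) (ω : ℝ → ℝ) : Prop where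
  integrable : Integrable ω
  support : ∀ x, x ∉ Ioc (0:ℝ) 1 → ω x = 0
  path : IsPath a fun x => (Real.Gamma α)⁻¹ * rlInt α ω x

/-- The solution of the fractional equation with datum `ω` and initial value `a`. -/
noncomputable def sol (α a : ℝ) (ω : ℝ → ℝ) : ℝ → ℝ :=
  prim a fun x => (Real.Gamma α)⁻¹ * rlInt α ω x

/-- The constant relating `∫ -p ω u` to the superposition of the jump forms. -/
noncomputable def formConst (α : ℝ) : ℝ := (Real.Gamma α)⁻¹ * abelConst α / (α * (1 + α))

/-- The energy `∫₀^∞ h^(-2-α) ‖u - u(· - h)‖² dh`. -/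
noncomputable def energy (α : ℝ) (U : ℝ → ℝ) : ℝ := ∫ h in Ioi (0:ℝ), h ^ (-2 - α) * incr U h

lemma formConst_pos {α : ℝ} (hα : α ∈ Ioo (0:ℝ) 1) : 0 < formConst α := by
  have h1 := Real.Gamma_pos_of_pos hα.1
  have h2 := abelConst_pos hα
  have h3 := hα.1
  unfold formConst
  positivity

lemma incr_nonneg (U : ℝ → ℝ) (h : ℝ) : 0 ≤ incr U h :=
  intervalIntegral.integral_nonneg zero_le_one fun _ _ => sq_nonneg _

lemma continuous_incr {U : ℝ → ℝ} (hU : Continuous U) : Continuous (incr U) := by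
  unfold incr
  exact intervalIntegral.continuous_parametric_intervalIntegral_of_continuous' (by fun_prop) 0 1

namespace IsSol

variable {α a : ℝ} {ω : ℝ → ℝ}

lemma continuous (hS : IsSol α a ω) : Continuous (sol α a ω) := hS.path.continuous

/-- Superposing the jump forms with weight `h^(-2-α)` replaces the jump integral by the Abel kernel
acting on `u' = I^α ω`, hence by a multiple of the primitive of `ω`; integrating by parts, with
`u(1) = 0` and the primitive vanishing at `0`, leaves the form `∫ -p ω u`. -/
lemma energy_form (hα : α ∈ Ioo (0:ℝ) 1) (hS : IsSol α a ω) {p : ℝ → ℝ} {K : NNReal}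
    (hp : LipschitzWith K p) :
    IntegrableOn (fun h => h ^ (-2 - α) *
      ∫ x in (0:ℝ)..1, deriv (fun y => p y * sol α a ω y) x * jump (sol α a ω) h x) (Ioi 0) ∧
    ∫ h in Ioi (0:ℝ), h ^ (-2 - α) *
      ∫ x in (0:ℝ)..1, deriv (fun y => p y * sol α a ω y) x * jump (sol α a ω) h x =
      formConst α * ∫ x in (0:ℝ)..1, -(p x * ω x * sol α a ω x) := by
  set γ := (Real.Gamma α)⁻¹ with hγ
  have hγ0 : 0 < γ := inv_pos.2 (Real.Gamma_pos_of_pos hα.1)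
  have hω := hS.integrable
  have hω0 := hS.support
  have hV := hS.path
  have acU : AbsolutelyContinuousOnInterval (sol α a ω) 0 1 := hV.absCont 0 1
  have acp : AbsolutelyContinuousOnInterval p 0 1 :=
    (hp.lipschitzOnWith (s := uIcc 0 1)).absolutelyContinuousOnInterval
  have acg : AbsolutelyContinuousOnInterval (fun y => p y * sol α a ω y) 0 1 := acp.fun_mul acU
  set g' := deriv (fun y => p y * sol α a ω y) with hg'
  set G := (Ioc (0:ℝ) 1).indicator g' with hG
  have hGi : Integrable G := by
    have := acg.intervalIntegrable_deriv
    rw [intervalIntegrable_iff_integrableOn_Ioc_of_le zero_le_one] at this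
    exact this.integrable_indicator measurableSet_Ioc
  have hG0 : ∀ x ∉ Ioc (0:ℝ) 1, G x = 0 := fun x hx => indicator_of_notMem hx _
  have hGeq : ∀ F : ℝ → ℝ, ∫ x in (0:ℝ)..1, G x * F x = ∫ x in (0:ℝ)..1, g' x * F x := by
    intro F
    rw [intervalIntegral.integral_of_le zero_le_one, intervalIntegral.integral_of_le zero_le_one]
    refine setIntegral_congr_fun measurableSet_Ioc fun x hx => ?_
    simp only [hG, indicator_of_mem hx]
  have habs0 : ∀ x ∉ Ioc (0:ℝ) 1, |ω x| = 0 := fun x hx => by rw [hω0 x hx, abs_zero]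
  have A1 := abel_inversion hα hω hω0
  have A2 := abel_inversion hα hω.abs habs0
  have hB : ∀ᵐ x, x ∈ Ioc (0:ℝ) 1 →
      Integrable (fun t => abelKer α x t * (γ * rlInt α ω t)) ∧
      ∫ t, |abelKer α x t * (γ * rlInt α ω t)| ≤ γ * (abelConst α * ∫ t, |ω t|) := by
    filter_upwards [A1, A2] with x h1 h2 hx
    obtain ⟨i1, -⟩ := h1 hx
    obtain ⟨i2, e2⟩ := h2 hx
    have i1' : Integrable (fun t => abelKer α x t * (γ * rlInt α ω t)) :=
      (i1.const_mul γ).congr (ae_of_all _ fun t => by ring)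
    refine ⟨i1', ?_⟩
    calc ∫ t, |abelKer α x t * (γ * rlInt α ω t)|
        ≤ ∫ t, γ * (abelKer α x t * rlInt α (fun t => |ω t|) t) := by
          refine integral_mono i1'.abs (i2.const_mul γ) fun t => ?_
          have hk : 0 ≤ abelKer α x t := by
            unfold abelKer
            split_ifs with h
            · exact Real.rpow_nonneg (by linarith) _
            · exact le_rfl
          simp only
          rw [abs_mul, abs_mul, abs_of_nonneg hk, abs_of_pos hγ0]
          have := mul_le_mul_of_nonneg_left (abs_rlInt_le α ω t) (mul_nonneg hk hγ0.le)
          linarith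
      _ = γ * (abelConst α * ∫ t in (0:ℝ)..x, |ω t|) := by rw [integral_const_mul, e2]
      _ ≤ γ * (abelConst α * ∫ t, |ω t|) := by
          have hc := abelConst_pos hα
          gcongr
          rw [intervalIntegral.integral_of_le hx.1.le]
          exact setIntegral_le_integral hω.abs (ae_of_all _ fun t => abs_nonneg _)
  obtain ⟨I1, E1⟩ := hV.superposition hα.1 hGi hG0 hB
  simp only [hGeq] at I1 E1
  refine ⟨I1, ?_⟩
  change α * (1 + α) * (∫ h in Ioi (0:ℝ), h ^ (-2 - α) *
      ∫ x in (0:ℝ)..1, g' x * jump (sol α a ω) h x) = _ at E1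
  have E2 : ∫ x in (0:ℝ)..1, g' x * ∫ t, abelKer α x t * (γ * rlInt α ω t) =
      ∫ x in (0:ℝ)..1, γ * abelConst α * ((∫ t in (0:ℝ)..x, ω t) * g' x) := by
    refine intervalIntegral.integral_congr_ae ?_
    filter_upwards [A1] with x h1 hx
    rw [uIoc_of_le zero_le_one] at hx
    obtain ⟨i1, e1⟩ := h1 hx
    have : ∫ t, abelKer α x t * (γ * rlInt α ω t) = γ * ∫ t, abelKer α x t * rlInt α ω t := by
      rw [← integral_const_mul]
      exact integral_congr_ae (ae_of_all _ fun t => by simp only; ring)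
    rw [this, e1]
    ring
  have acW : AbsolutelyContinuousOnInterval (fun x => ∫ t in (0:ℝ)..x, ω t) 0 1 :=
    (hω.intervalIntegrable).absolutelyContinuousOnInterval_intervalIntegral (by simp)
  have ibp := acW.integral_mul_deriv_eq_deriv_mul acg
  have hU1 : sol α a ω 1 = 0 := hV.prim_of_one_le le_rfl
  have E3 : ∫ x in (0:ℝ)..1, deriv (fun x => ∫ t in (0:ℝ)..x, ω t) x * (p x * sol α a ω x) =
      ∫ x in (0:ℝ)..1, p x * ω x * sol α a ω x := by
    refine intervalIntegral.integral_congr_ae ?_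
    filter_upwards [LocallyIntegrable.ae_hasDerivAt_integral hω.locallyIntegrable] with x hx _
    rw [(hx 0).deriv]
    ring
  rw [E3, hU1] at ibp
  simp only [intervalIntegral.integral_same, mul_zero, zero_mul, sub_zero, zero_sub] at ibp
  rw [E2, intervalIntegral.integral_const_mul, ibp] at E1
  have hα0 := hα.1
  rw [intervalIntegral.integral_neg, formConst, ← hγ]
  have : α * (1 + α) ≠ 0 := by positivity
  field_simp
  field_simp at E1
  linarith

/-- The energy of a solution is finite: the case `p = 1` of the energy identity bounds it by the
integrable superposition. -/
lemma integrableOn_energy (hα : α ∈ Ioo (0:ℝ) 1) (hS : IsSol α a ω) :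
    IntegrableOn (fun h => h ^ (-2 - α) * incr (sol α a ω) h) (Ioi 0) := by
  have hp : LipschitzWith 0 (fun _ : ℝ => (1:ℝ)) := LipschitzWith.const 1
  have h1 := (hS.energy_form hα hp).1.const_mul 2
  refine Integrable.mono' h1 ?_ ?_
  · exact (Measurable.mul (by fun_prop) (continuous_incr hS.continuous).measurable).aestronglyMeasurable
  · filter_upwards [ae_restrict_mem measurableSet_Ioi] with h hh
    have hh : 0 < h := hh
    have := hS.path.energy_le hp one_pos (fun _ _ => le_rfl) hh
    have hb : 0 < h ^ (-2 - α) := Real.rpow_pos_of_pos hh _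
    rw [Real.norm_of_nonneg (mul_nonneg hb.le (incr_nonneg _ _))]
    simp only [NNReal.coe_zero, zero_div, zero_mul, add_zero] at this
    have h3 : incr (sol α a ω) h ≤ 2 * ∫ x in (0:ℝ)..1,
        deriv (fun y => 1 * sol α a ω y) x * jump (sol α a ω) h x := by
      unfold sol; linarith
    calc h ^ (-2 - α) * incr (sol α a ω) h
        ≤ h ^ (-2 - α) * (2 * ∫ x in (0:ℝ)..1,
          deriv (fun y => 1 * sol α a ω y) x * jump (sol α a ω) h x) :=
          mul_le_mul_of_nonneg_left h3 hb.le
      _ = _ := by ring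

/-- The energy is controlled by the form up to the commutator term caused by `p'`. -/
lemma energy_le_form (hα : α ∈ Ioo (0:ℝ) 1) (hS : IsSol α a ω) {p : ℝ → ℝ} {K : NNReal}
    (hp : LipschitzWith K p) {δ : ℝ} (hδ : 0 < δ) (hpδ : ∀ x ∈ Icc (0:ℝ) 1, δ ≤ p x)
    (hR : IntegrableOn (fun h => h ^ (-2 - α) *
      ∫ x in (0:ℝ)..1, |jump (fun x => sol α a ω x ^ 2) h x|) (Ioi 0)) :
    δ / 2 * energy α (sol α a ω) ≤
      formConst α * (∫ x in (0:ℝ)..1, -(p x * ω x * sol α a ω x)) +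
      K / 2 * ∫ h in Ioi (0:ℝ), h ^ (-2 - α) *
        ∫ x in (0:ℝ)..1, |jump (fun x => sol α a ω x ^ 2) h x| := by
  obtain ⟨I1, E1⟩ := hS.energy_form hα hp
  rw [← E1, energy, ← integral_const_mul, ← integral_const_mul,
    ← integral_add I1 (hR.const_mul _)]
  refine setIntegral_mono_on ((hS.integrableOn_energy hα).const_mul _) (I1.add (hR.const_mul _))
    measurableSet_Ioi fun h hh => ?_
  have := hS.path.energy_le hp hδ hpδ (show 0 < h from hh)
  have h2 := mul_le_mul_of_nonneg_left this (Real.rpow_pos_of_pos (show 0 < h from hh) (-2 - α)).le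
  change h ^ (-2 - α) * (δ / 2 * incr (sol α a ω) h) ≤ h ^ (-2 - α) * ((∫ x in (0:ℝ)..1,
    deriv (fun y => p y * sol α a ω y) x * jump (sol α a ω) h x) +
    K / 2 * ∫ x in (0:ℝ)..1, |jump (fun x => sol α a ω x ^ 2) h x|) at h2
  linarith

end IsSol

/-! ### The commutator term is of lower order -/

/-- The `L¹` modulus of continuity `∫₀¹ |u(x)² - u(x - s)²| dx` of `u²`. -/
noncomputable def sqMod (U : ℝ → ℝ) (s : ℝ) : ℝ := ∫ x in (0:ℝ)..1, |U x ^ 2 - U (x - s) ^ 2|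

/-- The squared `L²(0,1)` norm of a real function. -/
noncomputable def mass (U : ℝ → ℝ) : ℝ := ∫ x in (0:ℝ)..1, U x ^ 2

lemma mass_nonneg (U : ℝ → ℝ) : 0 ≤ mass U :=
  intervalIntegral.integral_nonneg zero_le_one fun _ _ => sq_nonneg _

lemma sqMod_nonneg (U : ℝ → ℝ) (s : ℝ) : 0 ≤ sqMod U s :=
  intervalIntegral.integral_nonneg zero_le_one fun _ _ => abs_nonneg _

lemma continuous_sqMod {U : ℝ → ℝ} (hU : Continuous U) : Continuous (sqMod U) := by
  unfold sqMod
  exact intervalIntegral.continuous_parametric_intervalIntegral_of_continuous' (by fun_prop) 0 1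

lemma energy_nonneg (α : ℝ) (U : ℝ → ℝ) : 0 ≤ energy α U :=
  setIntegral_nonneg measurableSet_Ioi fun _ hh =>
    mul_nonneg (Real.rpow_nonneg (le_of_lt hh) _) (incr_nonneg _ _)

/-- For short shifts the modulus of `u²` is absorbed by the increments of `u`. -/
lemma sqMod_le_incr {U : ℝ → ℝ} (hU : Continuous U) {s η : ℝ} (hs : 0 < s) (hη : s ≤ η) :
    sqMod U s ≤ 2 * (η / s) * incr U s + s / η * mass U := by
  have hη0 : 0 < η := hs.trans_le hη
  rw [incr, mass, ← intervalIntegral.integral_const_mul, ← intervalIntegral.integral_const_mul,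
    ← intervalIntegral.integral_add (Continuous.intervalIntegrable (by fun_prop) _ _)
    (Continuous.intervalIntegrable (by fun_prop) _ _)]
  refine intervalIntegral.integral_mono_on zero_le_one
      (Continuous.intervalIntegrable (by fun_prop) _ _)
      (Continuous.intervalIntegrable (by fun_prop) _ _) fun x _ => ?_
  set A := U x
  set d := U x - U (x - s) with hd
  have hB : U (x - s) = A - d := by rw [hd]; ring
  rw [hB]
  set q := s / η with hq
  have hq0 : 0 < q := div_pos hs hη0
  have hq1 : q ≤ 1 := (div_le_one hη0).2 hη
  have hqi : η / s = q⁻¹ := by rw [hq, inv_div]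
  rw [hqi]
  have h1 : 1 ≤ q⁻¹ := (one_le_inv₀ hq0).2 hq1
  -- Young's inequality with weight `q = s / η`.
  have y1 : 2 * A * d ≤ q * A ^ 2 + q⁻¹ * d ^ 2 := by
    have : 0 ≤ q⁻¹ * (q * A - d) ^ 2 := by positivity
    have e : q⁻¹ * (q * A - d) ^ 2 = q * A ^ 2 + q⁻¹ * d ^ 2 - 2 * A * d := by field_simp; ring
    linarith
  have y2 : -(2 * A * d) ≤ q * A ^ 2 + q⁻¹ * d ^ 2 := by
    have : 0 ≤ q⁻¹ * (q * A + d) ^ 2 := by positivity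
    have e : q⁻¹ * (q * A + d) ^ 2 = q * A ^ 2 + q⁻¹ * d ^ 2 + 2 * A * d := by field_simp; ring
    linarith
  have y3 : d ^ 2 ≤ q⁻¹ * d ^ 2 := le_mul_of_one_le_left (sq_nonneg _) h1
  rw [abs_le]
  constructor <;> nlinarith [sq_nonneg d]

/-- For long shifts the modulus of `u²` is bounded crudely; the part of the shifted interval to the
left of `0` contributes the initial value. -/
lemma sqMod_le_mass {U : ℝ → ℝ} (hU : Continuous U) {a : ℝ} (h0 : ∀ x ≤ 0, U x = a) {s : ℝ}
    (hs : 0 < s) : sqMod U s ≤ 2 * mass U + a ^ 2 := by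
  have hc : Continuous fun x => U x ^ 2 := hU.pow 2
  have e0 : ∀ c d : ℝ, c ≤ d → d ≤ 0 → ∫ x in c..d, U x ^ 2 = (d - c) * a ^ 2 := by
    intro c d hcd hd
    rw [intervalIntegral.integral_congr (g := fun _ => a ^ 2), intervalIntegral.integral_const,
      smul_eq_mul]
    intro x hx
    rw [uIcc_of_le hcd] at hx
    simp only
    rw [h0 x (hx.2.trans hd)]
  have shift : ∫ x in (0:ℝ)..1, U (x - s) ^ 2 ≤ mass U + a ^ 2 := by
    rw [intervalIntegral.integral_comp_sub_right (fun x => U x ^ 2) s]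
    rcases le_total s 1 with h1 | h1
    · rw [← intervalIntegral.integral_add_adjacent_intervals (b := 0)
        (hc.intervalIntegrable _ _) (hc.intervalIntegrable _ _), e0 _ _ (by linarith) le_rfl]
      have : ∫ x in (0:ℝ)..(1 - s), U x ^ 2 ≤ mass U :=
        intervalIntegral.integral_mono_interval le_rfl (by linarith) (by linarith)
          (ae_of_all _ fun x => sq_nonneg _) (hc.intervalIntegrable _ _)
      nlinarith [sq_nonneg a]
    · rw [e0 _ _ (by linarith) (by linarith)]
      linarith [mass_nonneg U]
  calc sqMod U s ≤ ∫ x in (0:ℝ)..1, (U x ^ 2 + U (x - s) ^ 2) := by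
        refine intervalIntegral.integral_mono_on zero_le_one
          (Continuous.intervalIntegrable (by fun_prop) _ _)
          (Continuous.intervalIntegrable (by fun_prop) _ _) fun x _ => ?_
        rw [abs_le]
        constructor <;> nlinarith [sq_nonneg (U x), sq_nonneg (U (x - s))]
    _ = mass U + ∫ x in (0:ℝ)..1, U (x - s) ^ 2 :=
        intervalIntegral.integral_add (Continuous.intervalIntegrable (by fun_prop) _ _)
          (Continuous.intervalIntegrable (by fun_prop) _ _)
    _ ≤ _ := by linarith

/-- The weighted modulus of `u²`, split at `s = η`: the short shifts use `sqMod_le_incr`, the long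
ones `sqMod_le_mass`. -/
lemma sqMod_weighted {α : ℝ} (hα : α ∈ Ioo (0:ℝ) 1) {U : ℝ → ℝ} (hU : Continuous U) {a : ℝ}
    (h0 : ∀ x ≤ 0, U x = a)
    (hE : IntegrableOn (fun h => h ^ (-2 - α) * incr U h) (Ioi 0)) {η : ℝ} (hη : 0 < η) :
    IntegrableOn (fun s => s ^ (-1 - α) * sqMod U s) (Ioi 0) ∧
    ∫ s in Ioi (0:ℝ), s ^ (-1 - α) * sqMod U s ≤
      2 * η * energy α U + mass U / η * (η ^ (1 - α) / (1 - α)) +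
        (2 * mass U + a ^ 2) * (η ^ (-α) / α) := by
  have hα0 := hα.1
  have hα1 := hα.2
  have hM := mass_nonneg U
  have i1 : IntegrableOn (fun s => 2 * η * (s ^ (-2 - α) * incr U s)) (Ioi 0) := hE.const_mul _
  have j2 : IntegrableOn (fun s : ℝ => s ^ (-α)) (Ioc 0 η) := by
    have := intervalIntegral.intervalIntegrable_rpow' (a := 0) (b := η)
      (show -1 < -α by linarith)
    rwa [intervalIntegrable_iff_integrableOn_Ioc_of_le hη.le] at this
  have j3 : IntegrableOn (fun s : ℝ => s ^ (-1 - α)) (Ioi η) :=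
    integrableOn_Ioi_rpow_of_lt (by linarith) hη
  have s2 : Ioc 0 η ∩ Ioi (0:ℝ) = Ioc 0 η := inter_eq_left.2 fun x hx => hx.1
  have s3 : Ioi η ∩ Ioi (0:ℝ) = Ioi η := inter_eq_left.2 (Ioi_subset_Ioi hη.le)
  have i2 : IntegrableOn (fun s => mass U / η * (Ioc 0 η).indicator (fun s : ℝ => s ^ (-α)) s)
      (Ioi 0) := (j2.integrable_indicator measurableSet_Ioc).integrableOn.const_mul _
  have i3 : IntegrableOn (fun s => (2 * mass U + a ^ 2) *
      (Ioi η).indicator (fun s : ℝ => s ^ (-1 - α)) s) (Ioi 0) :=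
    (j3.integrable_indicator measurableSet_Ioi).integrableOn.const_mul _
  have dom : ∀ s ∈ Ioi (0:ℝ), s ^ (-1 - α) * sqMod U s ≤ 2 * η * (s ^ (-2 - α) * incr U s) +
      mass U / η * (Ioc 0 η).indicator (fun s : ℝ => s ^ (-α)) s +
      (2 * mass U + a ^ 2) * (Ioi η).indicator (fun s : ℝ => s ^ (-1 - α)) s := by
    intro s hs
    have hs : 0 < s := hs
    have hp := Real.rpow_pos_of_pos hs (-1 - α)
    have hp2 := Real.rpow_pos_of_pos hs (-2 - α)
    by_cases hsη : s ≤ η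
    · rw [indicator_of_mem (show s ∈ Ioc 0 η from ⟨hs, hsη⟩),
        indicator_of_notMem (show s ∉ Ioi η from fun h => absurd hsη (not_le.2 h))]
      have := mul_le_mul_of_nonneg_left (sqMod_le_incr hU hs hsη) hp.le
      refine this.trans (le_of_eq ?_)
      rw [show -α = -2 - α + 1 + 1 by ring, Real.rpow_add_one hs.ne', Real.rpow_add_one hs.ne',
        show -1 - α = -2 - α + 1 by ring, Real.rpow_add_one hs.ne']
      field_simp
      ring
    · rw [indicator_of_notMem (show s ∉ Ioc 0 η from fun h => hsη h.2),
        indicator_of_mem (show s ∈ Ioi η from not_le.1 hsη)]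
      have := mul_le_mul_of_nonneg_left (sqMod_le_mass hU h0 hs) hp.le
      have h3 : 0 ≤ 2 * η * (s ^ (-2 - α) * incr U s) :=
        mul_nonneg (by positivity) (mul_nonneg hp2.le (incr_nonneg _ _))
      linarith
  have I : IntegrableOn (fun s => s ^ (-1 - α) * sqMod U s) (Ioi 0) := by
    refine Integrable.mono' ((i1.add i2).add i3) ?_ ?_
    · exact (Measurable.mul (by fun_prop) (continuous_sqMod hU).measurable).aestronglyMeasurable
    · filter_upwards [ae_restrict_mem measurableSet_Ioi] with s hs
      rw [Real.norm_of_nonneg (mul_nonneg (Real.rpow_nonneg (le_of_lt hs) _) (sqMod_nonneg _ _))]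
      exact dom s hs
  refine ⟨I, ?_⟩
  refine (setIntegral_mono_on I ((i1.add i2).add i3) measurableSet_Ioi dom).trans (le_of_eq ?_)
  rw [integral_add' (i1.add i2) i3, integral_add' i1 i2, integral_const_mul, integral_const_mul,
    integral_const_mul, integral_indicator measurableSet_Ioc, integral_indicator measurableSet_Ioi,
    Measure.restrict_restrict measurableSet_Ioc, Measure.restrict_restrict measurableSet_Ioi,
    s2, s3, integral_Ioi_rpow_of_lt (by linarith) hη, ← intervalIntegral.integral_of_le hη.le,
    integral_rpow (Or.inl (by linarith)), energy, show -α + 1 = 1 - α by ring,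
    show -1 - α + 1 = -α by ring, Real.zero_rpow (by linarith), sub_zero, neg_div_neg_eq]

lemma integral_abs_jump_sq_le {U : ℝ → ℝ} (hU : Continuous U) {h : ℝ} (hh : 0 < h) :
    ∫ x in (0:ℝ)..1, |jump (fun x => U x ^ 2) h x| ≤ ∫ s in (0:ℝ)..h, sqMod U s := by
  have hc : Continuous fun x => U x ^ 2 := hU.pow 2
  have hcj := continuous_jump hc h
  have hG : Continuous (Function.uncurry fun x s : ℝ => |U x ^ 2 - U (x - s) ^ 2|) := by fun_prop
  calc ∫ x in (0:ℝ)..1, |jump (fun x => U x ^ 2) h x|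
      ≤ ∫ x in (0:ℝ)..1, ∫ s in (0:ℝ)..h, |U x ^ 2 - U (x - s) ^ 2| := by
        refine intervalIntegral.integral_mono_on zero_le_one
          (Continuous.intervalIntegrable (by fun_prop) _ _)
          (Continuous.intervalIntegrable
            (intervalIntegral.continuous_parametric_intervalIntegral_of_continuous' hG 0 h) _ _)
          fun x _ => ?_
        rw [jump_eq_integral hc]
        exact intervalIntegral.abs_integral_le_integral_abs hh.le
    _ = ∫ s in (0:ℝ)..h, sqMod U s := by
        unfold sqMod
        have hi : Integrable (Function.uncurry fun x s : ℝ => |U x ^ 2 - U (x - s) ^ 2|)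
            ((volume.restrict (Ioc (0:ℝ) 1)).prod (volume.restrict (Ioc 0 h))) := by
          rw [Measure.prod_restrict]
          exact (hG.continuousOn.integrableOn_compact (isCompact_Icc.prod isCompact_Icc)).mono_set
            (prod_mono Ioc_subset_Icc_self Ioc_subset_Icc_self)
        simp only [intervalIntegral.integral_of_le zero_le_one,
          intervalIntegral.integral_of_le hh.le]
        exact integral_integral_swap hi

/-- Fubini's theorem together with `∫_s^∞ h^(-2-α) dh = s^(-1-α) / (1 + α)`. -/
lemma superpose_primitive {α : ℝ} (hα : 0 < α) {ψ : ℝ → ℝ} (hψ : Continuous ψ)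
    (hψ0 : ∀ s, 0 ≤ ψ s) (hI : IntegrableOn (fun s => s ^ (-1 - α) * ψ s) (Ioi 0)) :
    IntegrableOn (fun h => h ^ (-2 - α) * ∫ s in (0:ℝ)..h, ψ s) (Ioi 0) ∧
    ∫ h in Ioi (0:ℝ), h ^ (-2 - α) * ∫ s in (0:ℝ)..h, ψ s =
      (1 + α)⁻¹ * ∫ s in Ioi (0:ℝ), s ^ (-1 - α) * ψ s := by
  set F : ℝ × ℝ → ℝ := fun z => if z.2 < z.1 then z.1 ^ (-2 - α) * ψ z.2 else 0 with hF
  have hFm : Measurable F := Measurable.ite (measurableSet_lt measurable_snd measurable_fst)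
    ((measurable_fst.pow_const _).mul (hψ.measurable.comp measurable_snd)) measurable_const
  have e1 : ∀ s ∈ Ioi (0:ℝ), (fun h => F (h, s)) =
      (Ioi s).indicator (fun h => h ^ (-2 - α) * ψ s) := by
    intro s _
    ext h
    by_cases hsh : s < h
    · rw [indicator_of_mem (show h ∈ Ioi s from hsh)]
      simp only [hF, if_pos hsh]
    · rw [indicator_of_notMem (show h ∉ Ioi s from hsh)]
      simp only [hF, if_neg hsh]
  have sub : ∀ s ∈ Ioi (0:ℝ), Ioi s ∩ Ioi (0:ℝ) = Ioi s := fun s hs =>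
    inter_eq_left.2 (Ioi_subset_Ioi (le_of_lt hs))
  have i1 : ∀ s ∈ Ioi (0:ℝ), IntegrableOn (fun h => F (h, s)) (Ioi 0) := by
    intro s hs
    rw [e1 s hs, IntegrableOn, integrable_indicator_iff measurableSet_Ioi, IntegrableOn,
      Measure.restrict_restrict measurableSet_Ioi, sub s hs]
    exact (integrableOn_Ioi_rpow_of_lt (by linarith) hs).mul_const _
  have v1 : ∀ s ∈ Ioi (0:ℝ), ∫ h in Ioi (0:ℝ), F (h, s) = (1 + α)⁻¹ * (s ^ (-1 - α) * ψ s) := by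
    intro s hs
    rw [e1 s hs, integral_indicator measurableSet_Ioi,
      Measure.restrict_restrict measurableSet_Ioi, sub s hs, integral_mul_const,
      integral_Ioi_rpow_of_lt (by linarith) hs, show -2 - α + 1 = -1 - α by ring]
    have h1 : 1 + α ≠ 0 := by linarith
    have h2 : -1 - α ≠ 0 := by linarith
    field_simp
    ring
  have Fnn : ∀ h ∈ Ioi (0:ℝ), ∀ s, 0 ≤ F (h, s) := by
    intro h hh s
    simp only [hF]
    split_ifs
    · exact mul_nonneg (Real.rpow_nonneg (le_of_lt hh) _) (hψ0 s)
    · exact le_rfl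
  have hFi : Integrable F ((volume.restrict (Ioi (0:ℝ))).prod (volume.restrict (Ioi (0:ℝ)))) := by
    rw [integrable_prod_iff' hFm.aestronglyMeasurable]
    constructor
    · filter_upwards [ae_restrict_mem measurableSet_Ioi] with s hs using i1 s hs
    · refine (hI.const_mul (1 + α)⁻¹).congr ?_
      filter_upwards [ae_restrict_mem measurableSet_Ioi] with s hs
      rw [← v1 s hs]
      refine setIntegral_congr_fun measurableSet_Ioi fun h hh => ?_
      exact (Real.norm_of_nonneg (Fnn h hh s)).symm
  have v2 : ∀ h ∈ Ioi (0:ℝ), ∫ s in Ioi (0:ℝ), F (h, s) = h ^ (-2 - α) * ∫ s in (0:ℝ)..h, ψ s := by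
    intro h hh
    have hh : 0 < h := hh
    have : (fun s => F (h, s)) = (Iio h).indicator (fun s => h ^ (-2 - α) * ψ s) := by
      ext s
      by_cases hsh : s < h
      · rw [indicator_of_mem (show s ∈ Iio h from hsh)]
        simp only [hF, if_pos hsh]
      · rw [indicator_of_notMem (show s ∉ Iio h from hsh)]
        simp only [hF, if_neg hsh]
    rw [this, integral_indicator measurableSet_Iio, Measure.restrict_restrict measurableSet_Iio,
      Iio_inter_Ioi, integral_const_mul, intervalIntegral.integral_of_le hh.le,
      integral_Ioc_eq_integral_Ioo]
  constructor
  · refine hFi.integral_prod_left.congr ?_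
    filter_upwards [ae_restrict_mem measurableSet_Ioi] with h hh using v2 h hh
  · rw [← setIntegral_congr_fun measurableSet_Ioi v2, ← integral_const_mul,
      ← setIntegral_congr_fun measurableSet_Ioi v1]
    exact integral_integral_swap (f := fun h s => F (h, s)) hFi

/-- The square of the initial value is bounded by a small multiple of the energy plus a multiple of
the mass, because a path that starts at a large value must either stay large or move away. -/
lemma exists_initial_bound {α : ℝ} (hα : α ∈ Ioo (0:ℝ) 1) {ε : ℝ} (hε : 0 < ε) :
    ∃ C : ℝ, 0 ≤ C ∧ ∀ (U : ℝ → ℝ) (a : ℝ), Continuous U → (∀ x ≤ 0, U x = a) →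
      IntegrableOn (fun h => h ^ (-2 - α) * incr U h) (Ioi 0) →
      a ^ 2 ≤ ε * energy α U + C * mass U := by
  have hα0 := hα.1
  -- The scale `ρ` is chosen such that `4 ρ^α ≤ ε`.
  set ρ : ℝ := min 1 ((ε / 4) ^ α⁻¹) with hρ
  have hρ0 : 0 < ρ := lt_min one_pos (Real.rpow_pos_of_pos (by linarith) _)
  have hρ1 : ρ ≤ 1 := min_le_left _ _
  have hρε : 4 * ρ ^ α ≤ ε := by
    have : ρ ^ α ≤ ((ε / 4) ^ α⁻¹) ^ α :=
      Real.rpow_le_rpow hρ0.le (min_le_right _ _) hα0.le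
    rw [← Real.rpow_mul (by linarith), inv_mul_cancel₀ hα0.ne', Real.rpow_one] at this
    linarith
  set r := ρ / 2 with hr
  have hr0 : 0 < r := by positivity
  have hrα := Real.rpow_pos_of_pos hρ0 α
  have hr2 := Real.rpow_pos_of_pos hr0 (-2 - α)
  refine ⟨4 * ρ ^ α * (r * r ^ (-2 - α)), by positivity, fun U a hU h0 hE => ?_⟩
  -- On `(0, h)` the shifted path equals `a`, so `a` is the difference of `u` and its increment.
  have hD : ∀ h, 0 < h → h ≤ 1 → h * a ^ 2 ≤ 2 * incr U h + 2 * mass U := by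
    intro h hh h1
    have k1 : ∫ x in (0:ℝ)..h, (U x - a) ^ 2 ≤ incr U h := by
      calc ∫ x in (0:ℝ)..h, (U x - a) ^ 2 = ∫ x in (0:ℝ)..h, (U x - U (x - h)) ^ 2 := by
            refine intervalIntegral.integral_congr fun x hx => ?_
            rw [uIcc_of_le hh.le] at hx
            rw [h0 (x - h) (by linarith [hx.2])]
        _ ≤ incr U h := intervalIntegral.integral_mono_interval le_rfl hh.le h1
            (ae_of_all _ fun x => sq_nonneg _) (Continuous.intervalIntegrable (by fun_prop) _ _)
    have k2 : ∫ x in (0:ℝ)..h, U x ^ 2 ≤ mass U :=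
      intervalIntegral.integral_mono_interval le_rfl hh.le h1
        (ae_of_all _ fun x => sq_nonneg _) (Continuous.intervalIntegrable (by fun_prop) _ _)
    have k3 : h * a ^ 2 ≤ ∫ x in (0:ℝ)..h, (2 * (U x - a) ^ 2 + 2 * U x ^ 2) := by
      have : h * a ^ 2 = ∫ _ in (0:ℝ)..h, a ^ 2 := by
        rw [intervalIntegral.integral_const, smul_eq_mul, sub_zero]
      rw [this]
      refine intervalIntegral.integral_mono_on hh.le
        (Continuous.intervalIntegrable (by fun_prop) _ _)
        (Continuous.intervalIntegrable (by fun_prop) _ _) fun x _ => ?_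
      nlinarith [sq_nonneg (2 * U x - a)]
    rw [intervalIntegral.integral_add (Continuous.intervalIntegrable (by fun_prop) _ _)
      (Continuous.intervalIntegrable (by fun_prop) _ _), intervalIntegral.integral_const_mul,
      intervalIntegral.integral_const_mul] at k3
    linarith
  have hM := mass_nonneg U
  have sub : Ioc r ρ ⊆ Ioi (0:ℝ) := fun h hh => hr0.trans hh.1
  have hEs : IntegrableOn (fun h => h ^ (-2 - α) * incr U h) (Ioc r ρ) := hE.mono_set sub
  have hvol : (volume (Ioc r ρ)).toReal = r := by
    rw [Real.volume_Ioc, ENNReal.toReal_ofReal (by linarith)]; linarith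
  have hci : ∀ c : ℝ, IntegrableOn (fun _ : ℝ => c) (Ioc r ρ) := fun c =>
    integrableOn_const (by simp)
  have hcv : ∀ c : ℝ, ∫ _ in Ioc r ρ, c = r * c := fun c => by
    rw [setIntegral_const, smul_eq_mul, Measure.real, hvol]
  -- Averaging the previous bound over `ρ / 2 < h ≤ ρ` with weight `h^(-2-α)` produces the energy.
  have main : ∫ _ in Ioc r ρ, ρ ^ (-1 - α) * a ^ 2 ≤
      ∫ h in Ioc r ρ, (2 * (h ^ (-2 - α) * incr U h) + 2 * (r ^ (-2 - α) * mass U)) := by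
    refine setIntegral_mono_on (hci _) ((hEs.const_mul 2).add (hci _)) measurableSet_Ioc
      fun h hh => ?_
    have hh0 : 0 < h := hr0.trans hh.1
    have l1 : ρ ^ (-1 - α) ≤ h ^ (-1 - α) :=
      Real.rpow_le_rpow_of_nonpos hh0 hh.2 (by linarith)
    have l2 : h ^ (-2 - α) ≤ r ^ (-2 - α) :=
      Real.rpow_le_rpow_of_nonpos hr0 hh.1.le (by linarith)
    have l3 : h ^ (-1 - α) = h ^ (-2 - α) * h := by
      rw [← Real.rpow_add_one hh0.ne']; congr 1; ring
    have l4 := mul_le_mul_of_nonneg_left (hD h hh0 (hh.2.trans hρ1))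
      (Real.rpow_pos_of_pos hh0 (-2 - α)).le
    have l5 := mul_le_mul_of_nonneg_right l1 (sq_nonneg a)
    have l6 := mul_le_mul_of_nonneg_right l2 hM
    rw [l3] at l5
    linarith
  rw [integral_add (hEs.const_mul 2) (hci _), hcv, hcv, integral_const_mul] at main
  have hEle : ∫ h in Ioc r ρ, h ^ (-2 - α) * incr U h ≤ energy α U := by
    refine setIntegral_mono_set hE ?_ sub.eventuallyLE
    filter_upwards [ae_restrict_mem measurableSet_Ioi] with h hh
    exact mul_nonneg (Real.rpow_nonneg (le_of_lt hh) _) (incr_nonneg _ _)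
  have hρi : ρ ^ α * (r * ρ ^ (-1 - α)) = 1 / 2 := by
    have : ρ ^ α * ρ ^ (-1 - α) = ρ⁻¹ := by
      rw [← Real.rpow_add hρ0, show α + (-1 - α) = -1 by ring, Real.rpow_neg_one]
    calc ρ ^ α * (r * ρ ^ (-1 - α)) = r * (ρ ^ α * ρ ^ (-1 - α)) := by ring
      _ = 1 / 2 := by rw [this, hr]; field_simp
  have fin := mul_le_mul_of_nonneg_left (main.trans (add_le_add_left
    (mul_le_mul_of_nonneg_left hEle zero_le_two) _)) hrα.le
  have e1 : ρ ^ α * (r * (ρ ^ (-1 - α) * a ^ 2)) = a ^ 2 / 2 := by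
    linear_combination a ^ 2 * hρi
  rw [e1] at fin
  have := mul_le_mul_of_nonneg_right hρε (energy_nonneg α U)
  linarith

/-- The commutator term is bounded by a small multiple of the energy plus a multiple of the mass. -/
lemma exists_commutator_bound {α : ℝ} (hα : α ∈ Ioo (0:ℝ) 1) {κ : ℝ} (hκ : 0 < κ) :
    ∃ C : ℝ, 0 ≤ C ∧ ∀ (U : ℝ → ℝ) (a : ℝ), Continuous U → (∀ x ≤ 0, U x = a) →
      IntegrableOn (fun h => h ^ (-2 - α) * incr U h) (Ioi 0) →
      IntegrableOn (fun h => h ^ (-2 - α) *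
        ∫ x in (0:ℝ)..1, |jump (fun x => U x ^ 2) h x|) (Ioi 0) ∧
      ∫ h in Ioi (0:ℝ), h ^ (-2 - α) * ∫ x in (0:ℝ)..1, |jump (fun x => U x ^ 2) h x| ≤
        κ * energy α U + C * mass U := by
  have hα0 := hα.1
  have hα1 := hα.2
  -- The energy from short shifts costs `2 η = κ / 2`, the one from the initial value `κ / 2`.
  set η := κ / 4 with hη
  have hη0 : 0 < η := by positivity
  set c := η ^ (-α) / α with hc
  have hc0 : 0 < c := by positivity
  obtain ⟨C₁, hC₁, hB⟩ := exists_initial_bound hα (ε := κ / (2 * c)) (by positivity)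
  set d := η ^ (1 - α) / (1 - α) with hd
  have hd0 : 0 < d := div_pos (Real.rpow_pos_of_pos hη0 _) (by linarith)
  refine ⟨1 / η * d + (2 + C₁) * c, by positivity, fun U a hU h0 hE => ?_⟩
  obtain ⟨I1, E1⟩ := sqMod_weighted hα hU h0 hE hη0
  obtain ⟨I2, E2⟩ := superpose_primitive hα0 (continuous_sqMod hU) (sqMod_nonneg U) I1
  have hc2 : Continuous fun x => U x ^ 2 := hU.pow 2
  have dom : ∀ h ∈ Ioi (0:ℝ), h ^ (-2 - α) * ∫ x in (0:ℝ)..1, |jump (fun x => U x ^ 2) h x| ≤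
      h ^ (-2 - α) * ∫ s in (0:ℝ)..h, sqMod U s := fun h hh =>
    mul_le_mul_of_nonneg_left (integral_abs_jump_sq_le hU hh) (Real.rpow_nonneg (le_of_lt hh) _)
  have hjc : Continuous fun h => ∫ x in (0:ℝ)..1, |jump (fun x => U x ^ 2) h x| := by
    have : Continuous (Function.uncurry fun h x : ℝ => |jump (fun x => U x ^ 2) h x|) := by
      have e : (Function.uncurry fun h x : ℝ => |jump (fun x => U x ^ 2) h x|) = fun z : ℝ × ℝ =>
          |z.1 * U z.2 ^ 2 - ((∫ t in (0:ℝ)..z.2, U t ^ 2) - ∫ t in (0:ℝ)..(z.2 - z.1), U t ^ 2)| := by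
        ext ⟨h, x⟩
        simp only [Function.uncurry, jump]
        rw [intervalIntegral.integral_interval_sub_left (hc2.intervalIntegrable _ _)
          (hc2.intervalIntegrable _ _)]
      rw [e]
      have hp : Continuous fun x => ∫ t in (0:ℝ)..x, U t ^ 2 :=
        intervalIntegral.continuous_primitive (fun a b => hc2.intervalIntegrable a b) 0
      have hp1 : Continuous fun z : ℝ × ℝ => ∫ t in (0:ℝ)..z.2, U t ^ 2 := hp.comp continuous_snd
      have hp2 : Continuous fun z : ℝ × ℝ => ∫ t in (0:ℝ)..(z.2 - z.1), U t ^ 2 :=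
        hp.comp (continuous_snd.sub continuous_fst)
      fun_prop
    exact intervalIntegral.continuous_parametric_intervalIntegral_of_continuous' this 0 1
  have I3 : IntegrableOn (fun h => h ^ (-2 - α) *
      ∫ x in (0:ℝ)..1, |jump (fun x => U x ^ 2) h x|) (Ioi 0) := by
    refine Integrable.mono' I2
      (Measurable.mul (by fun_prop) hjc.measurable).aestronglyMeasurable ?_
    filter_upwards [ae_restrict_mem measurableSet_Ioi] with h hh
    rw [Real.norm_of_nonneg (mul_nonneg (Real.rpow_nonneg (le_of_lt hh) _)
      (intervalIntegral.integral_nonneg zero_le_one fun _ _ => abs_nonneg _))]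
    exact dom h hh
  refine ⟨I3, ?_⟩
  have hpos : 0 ≤ ∫ s in Ioi (0:ℝ), s ^ (-1 - α) * sqMod U s :=
    setIntegral_nonneg measurableSet_Ioi fun s hs =>
      mul_nonneg (Real.rpow_nonneg (le_of_lt hs) _) (sqMod_nonneg _ _)
  have hinv : (1 + α)⁻¹ ≤ 1 := inv_le_one_of_one_le₀ (by linarith)
  calc _ ≤ ∫ h in Ioi (0:ℝ), h ^ (-2 - α) * ∫ s in (0:ℝ)..h, sqMod U s :=
        setIntegral_mono_on I3 I2 measurableSet_Ioi dom
    _ ≤ ∫ s in Ioi (0:ℝ), s ^ (-1 - α) * sqMod U s := by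
        rw [E2]; exact mul_le_of_le_one_left hpos hinv
    _ ≤ 2 * η * energy α U + mass U / η * d + (2 * mass U + a ^ 2) * c := E1
    _ ≤ 2 * η * energy α U + mass U / η * d +
        (2 * mass U + (κ / (2 * c) * energy α U + C₁ * mass U)) * c := by
        have := hB U a hU h0 hE
        gcongr
    _ = κ * energy α U + (1 / η * d + (2 + C₁) * c) * mass U := by
        have : κ / (2 * c) * c = κ / 2 := by field_simp
        have h4 : 2 * η = κ / 2 := by rw [hη]; ring
        rw [h4]
        linear_combination energy α U * this

/-! ### The Gagliardo seminorm -/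

/-- The half `y < x` of the Gagliardo integral, by the substitution `h = x - y`. Lower Lebesgue
integrals avoid integrability side conditions. -/
lemma gagliardo_half_le {α : ℝ} {U : ℝ → ℝ} (hU : Continuous U)
    (hE : IntegrableOn (fun h => h ^ (-2 - α) * incr U h) (Ioi 0)) :
    ∫⁻ x in Ioc (0:ℝ) 1, ∫⁻ y in Ioc (0:ℝ) 1, (Iio x).indicator
      (fun y => ENNReal.ofReal ((U x - U y) ^ 2 / |x - y| ^ (2 + α))) y ≤
      ENNReal.ofReal (energy α U) := by
  calc ∫⁻ x in Ioc (0:ℝ) 1, ∫⁻ y in Ioc (0:ℝ) 1, (Iio x).indicator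
        (fun y => ENNReal.ofReal ((U x - U y) ^ 2 / |x - y| ^ (2 + α))) y
      ≤ ∫⁻ x in Ioc (0:ℝ) 1, ∫⁻ h in Ioi (0:ℝ),
          ENNReal.ofReal (h ^ (-2 - α) * (U x - U (x - h)) ^ 2) := by
        refine lintegral_mono fun x => ?_
        refine (setLIntegral_le_lintegral _ _).trans (le_of_eq ?_)
        rw [← lintegral_sub_left_eq_self _ x, ← lintegral_indicator measurableSet_Ioi]
        refine lintegral_congr fun h => ?_
        by_cases hh : 0 < h
        · rw [indicator_of_mem (show x - h ∈ Iio x from sub_lt_self x hh),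
            indicator_of_mem (show h ∈ Ioi (0:ℝ) from hh), sub_sub_cancel, abs_of_pos hh,
            show -2 - α = -(2 + α) by ring, Real.rpow_neg hh.le]
          congr 1
          ring
        · rw [indicator_of_notMem (show h ∉ Ioi (0:ℝ) from hh), indicator_of_notMem]
          intro h'
          have : x - h < x := h'
          exact hh (by linarith)
    _ = ∫⁻ h in Ioi (0:ℝ), ∫⁻ x in Ioc (0:ℝ) 1,
          ENNReal.ofReal (h ^ (-2 - α) * (U x - U (x - h)) ^ 2) := by
        refine lintegral_lintegral_swap ?_
        have : Measurable fun z : ℝ × ℝ => z.2 ^ (-2 - α) * (U z.1 - U (z.1 - z.2)) ^ 2 :=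
          Measurable.mul (by fun_prop) (Continuous.measurable (by fun_prop))
        exact this.ennreal_ofReal.aemeasurable
    _ = ∫⁻ h in Ioi (0:ℝ), ENNReal.ofReal (h ^ (-2 - α) * incr U h) := by
        refine setLIntegral_congr_fun measurableSet_Ioi fun h hh => ?_
        have hb : 0 ≤ h ^ (-2 - α) := Real.rpow_nonneg (le_of_lt hh) _
        rw [incr, intervalIntegral.integral_of_le zero_le_one, ← integral_const_mul,
          ofReal_integral_eq_lintegral_ofReal]
        · have : Continuous fun x => h ^ (-2 - α) * (U x - U (x - h)) ^ 2 := by fun_prop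
          exact (this.integrableOn_Icc).mono_set Ioc_subset_Icc_self
        · exact ae_of_all _ fun x => mul_nonneg hb (sq_nonneg _)
    _ = ENNReal.ofReal (energy α U) := by
        rw [energy, ofReal_integral_eq_lintegral_ofReal hE]
        filter_upwards [ae_restrict_mem measurableSet_Ioi] with h hh
        exact mul_nonneg (Real.rpow_nonneg (le_of_lt hh) _) (incr_nonneg _ _)

lemma gagliardo_le {α : ℝ} {U : ℝ → ℝ} (hU : Continuous U)
    (hE : IntegrableOn (fun h => h ^ (-2 - α) * incr U h) (Ioi 0)) :
    ∫⁻ x in Ioc (0:ℝ) 1, ∫⁻ y in Ioc (0:ℝ) 1,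
      ENNReal.ofReal ((U x - U y) ^ 2 / |x - y| ^ (2 + α)) ≤ 2 * ENNReal.ofReal (energy α U) := by
  have hm : Measurable fun z : ℝ × ℝ =>
      ENNReal.ofReal ((U z.1 - U z.2) ^ 2 / |z.1 - z.2| ^ (2 + α)) := by
    have h1 : Measurable fun z : ℝ × ℝ => (U z.1 - U z.2) ^ 2 :=
      Continuous.measurable (by fun_prop)
    have h2 : Measurable fun z : ℝ × ℝ => |z.1 - z.2| ^ (2 + α) :=
      (Continuous.measurable (by fun_prop : Continuous fun z : ℝ × ℝ => |z.1 - z.2|)).pow_const _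
    exact (h1.div h2).ennreal_ofReal
  set g : ℝ → ℝ → ENNReal := fun x y => ENNReal.ofReal ((U x - U y) ^ 2 / |x - y| ^ (2 + α)) with hg
  set A : ℝ → ℝ → ENNReal := fun x y => (Iio x).indicator (g x) y with hA
  have hAm : Measurable (Function.uncurry A) := by
    have : Function.uncurry A = {z : ℝ × ℝ | z.2 < z.1}.indicator (Function.uncurry g) := by
      ext ⟨x, y⟩
      simp [A, indicator, Function.uncurry]
    rw [this]
    exact hm.indicator (measurableSet_lt measurable_snd measurable_fst)
  have split : ∀ x y, g x y = A x y + A y x := by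
    intro x y
    have hs : g x y = g y x := by
      simp only [hg]
      rw [abs_sub_comm, ← neg_sub (U y), neg_sq]
    rcases lt_trichotomy y x with h | h | h
    · simp only [hA]
      rw [indicator_of_mem (show y ∈ Iio x from h),
        indicator_of_notMem (show x ∉ Iio y from not_lt.2 h.le), add_zero]
    · subst h
      simp [hA, hg]
    · simp only [hA]
      rw [indicator_of_mem (show x ∈ Iio y from h),
        indicator_of_notMem (show y ∉ Iio x from not_lt.2 h.le), zero_add, hs]
  have half := gagliardo_half_le hU hE
  change ∫⁻ x in Ioc (0:ℝ) 1, ∫⁻ y in Ioc (0:ℝ) 1, A x y ≤ _ at half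
  have swap : ∫⁻ x in Ioc (0:ℝ) 1, ∫⁻ y in Ioc (0:ℝ) 1, A y x =
      ∫⁻ x in Ioc (0:ℝ) 1, ∫⁻ y in Ioc (0:ℝ) 1, A x y :=
    lintegral_lintegral_swap (f := fun x y => A y x) (hAm.comp measurable_swap).aemeasurable
  change ∫⁻ x in Ioc (0:ℝ) 1, ∫⁻ y in Ioc (0:ℝ) 1, g x y ≤ _
  have e : ∫⁻ x in Ioc (0:ℝ) 1, ∫⁻ y in Ioc (0:ℝ) 1, g x y =
      (∫⁻ x in Ioc (0:ℝ) 1, ∫⁻ y in Ioc (0:ℝ) 1, A x y) +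
      ∫⁻ x in Ioc (0:ℝ) 1, ∫⁻ y in Ioc (0:ℝ) 1, A y x := by
    have hA1 : Measurable fun x => ∫⁻ y in Ioc (0:ℝ) 1, A x y := hAm.lintegral_prod_right'
    rw [← lintegral_add_left hA1]
    refine lintegral_congr fun x => ?_
    have hA2 : Measurable (A x) := hAm.comp measurable_prodMk_left
    rw [← lintegral_add_left hA2]
    exact lintegral_congr fun y => split x y
  rw [e, swap, ← two_mul]
  gcongr

lemma sobSeminormSq_le {α : ℝ} {u : ℝ → ℂ} {R J : ℝ → ℝ} (hR : Continuous R) (hJ : Continuous J)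
    (hu : ∀ x ∈ Icc (0:ℝ) 1, u x = ⟨R x, J x⟩)
    (hER : IntegrableOn (fun h => h ^ (-2 - α) * incr R h) (Ioi 0))
    (hEJ : IntegrableOn (fun h => h ^ (-2 - α) * incr J h) (Ioi 0)) :
    sobSeminormSq ((1 + α) / 2) u ≤ 2 * (energy α R + energy α J) := by
  have hs : 1 + 2 * ((1 + α) / 2) = 2 + α := by ring
  have hER0 := energy_nonneg α R
  have hEJ0 := energy_nonneg α J
  unfold sobSeminormSq
  simp only [intervalIntegral.integral_of_le zero_le_one, hs]
  set z := ∫ x in Ioc (0:ℝ) 1, ∫ y in Ioc (0:ℝ) 1, ‖u x - u y‖ ^ 2 / |x - y| ^ (2 + α) with hz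
  have hm : ∀ W : ℝ → ℝ, Continuous W → Measurable fun z : ℝ × ℝ =>
      ENNReal.ofReal ((W z.1 - W z.2) ^ 2 / |z.1 - z.2| ^ (2 + α)) := by
    intro W hW
    have h1 : Measurable fun z : ℝ × ℝ => (W z.1 - W z.2) ^ 2 :=
      Continuous.measurable (by fun_prop)
    have h2 : Measurable fun z : ℝ × ℝ => |z.1 - z.2| ^ (2 + α) :=
      (Continuous.measurable (by fun_prop : Continuous fun z : ℝ × ℝ => |z.1 - z.2|)).pow_const _
    exact (h1.div h2).ennreal_ofReal
  have key : ‖z‖ₑ ≤ ENNReal.ofReal (2 * (energy α R + energy α J)) := by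
    calc ‖z‖ₑ ≤ ∫⁻ x in Ioc (0:ℝ) 1, ∫⁻ y in Ioc (0:ℝ) 1,
          ‖‖u x - u y‖ ^ 2 / |x - y| ^ (2 + α)‖ₑ :=
          (enorm_integral_le_lintegral_enorm _).trans
            (lintegral_mono fun x => enorm_integral_le_lintegral_enorm _)
      _ = ∫⁻ x in Ioc (0:ℝ) 1, ∫⁻ y in Ioc (0:ℝ) 1,
          (ENNReal.ofReal ((R x - R y) ^ 2 / |x - y| ^ (2 + α)) +
            ENNReal.ofReal ((J x - J y) ^ 2 / |x - y| ^ (2 + α))) := by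
          refine setLIntegral_congr_fun measurableSet_Ioc fun x hx => ?_
          refine setLIntegral_congr_fun measurableSet_Ioc fun y hy => ?_
          have hq : 0 ≤ |x - y| ^ (2 + α) := Real.rpow_nonneg (abs_nonneg _) _
          rw [Real.enorm_of_nonneg (div_nonneg (sq_nonneg _) hq),
            ← ENNReal.ofReal_add (div_nonneg (sq_nonneg _) hq) (div_nonneg (sq_nonneg _) hq),
            hu x (Ioc_subset_Icc_self hx), hu y (Ioc_subset_Icc_self hy), ← add_div,
            Complex.sq_norm, Complex.normSq_apply]
          simp only [Complex.sub_re, Complex.sub_im]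
          congr 2
          ring
      _ = (∫⁻ x in Ioc (0:ℝ) 1, ∫⁻ y in Ioc (0:ℝ) 1,
            ENNReal.ofReal ((R x - R y) ^ 2 / |x - y| ^ (2 + α))) +
          ∫⁻ x in Ioc (0:ℝ) 1, ∫⁻ y in Ioc (0:ℝ) 1,
            ENNReal.ofReal ((J x - J y) ^ 2 / |x - y| ^ (2 + α)) := by
          rw [← lintegral_add_left (hm R hR).lintegral_prod_right']
          refine lintegral_congr fun x => ?_
          rw [← lintegral_add_left]
          exact (hm R hR).comp measurable_prodMk_left
      _ ≤ 2 * ENNReal.ofReal (energy α R) + 2 * ENNReal.ofReal (energy α J) :=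
          add_le_add (gagliardo_le hR hER) (gagliardo_le hJ hEJ)
      _ = ENNReal.ofReal (2 * (energy α R + energy α J)) := by
          rw [← mul_add, ← ENNReal.ofReal_add hER0 hEJ0, ENNReal.ofReal_mul zero_le_two,
            ENNReal.ofReal_ofNat]
  rw [← ofReal_norm, ENNReal.ofReal_le_ofReal_iff (by positivity)] at key
  exact (le_abs_self z).trans key

/-! ### The Gårding inequality -/

lemma exists_garding_real {α : ℝ} (hα : α ∈ Ioo (0:ℝ) 1) {δ : ℝ} (hδ : 0 < δ) (K : NNReal) :
    ∃ C : ℝ, 0 ≤ C ∧ ∀ p : ℝ → ℝ, LipschitzWith K p → (∀ x ∈ Icc (0:ℝ) 1, δ ≤ p x) →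
      ∀ (a : ℝ) (ω : ℝ → ℝ), IsSol α a ω →
        δ / 4 * energy α (sol α a ω) ≤
          formConst α * (∫ x in (0:ℝ)..1, -(p x * ω x * sol α a ω x)) +
          C * mass (sol α a ω) := by
  have hK : (0:ℝ) ≤ K := K.2
  -- This choice makes the commutator term cost at most half of `δ / 2` times the energy.
  obtain ⟨C, hC, hB⟩ := exists_commutator_bound hα (κ := δ / (2 * (K + 1))) (by positivity)
  refine ⟨K / 2 * C, by positivity, fun p hp hpδ a ω hS => ?_⟩
  obtain ⟨I, B⟩ := hB (sol α a ω) a hS.continuous (fun x hx => hS.path.prim_of_nonpos hx)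
    (hS.integrableOn_energy hα)
  have h1 := hS.energy_le_form hα hp hδ hpδ I
  have h2 := mul_le_mul_of_nonneg_left B (show (0:ℝ) ≤ K / 2 by positivity)
  have h3 : (K : ℝ) / 2 * (δ / (2 * (K + 1))) ≤ δ / 4 := by
    rw [div_mul_div_comm, div_le_div_iff₀ (by positivity) (by norm_num)]
    nlinarith
  have h4 := mul_le_mul_of_nonneg_right h3 (energy_nonneg α (sol α a ω))
  linarith

/-- The real part of the datum, extended by zero. -/
noncomputable def rePart (w : ℝ → ℂ) : ℝ → ℝ := (Ioc (0:ℝ) 1).indicator fun x => (w x).re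

/-- The imaginary part of the datum, extended by zero. -/
noncomputable def imPart (w : ℝ → ℂ) : ℝ → ℝ := (Ioc (0:ℝ) 1).indicator fun x => (w x).im

lemma SqIntOn.integrableOn {w : ℝ → ℂ} (hw : SqIntOn w) : IntegrableOn w (Ioc (0:ℝ) 1) := by
  have h1 : IntegrableOn (fun _ : ℝ => (1:ℝ)) (Ioc 0 1) := integrableOn_const (by simp)
  have h2 : IntegrableOn (fun x => 1 + ‖w x‖ ^ 2) (Ioc 0 1) := Integrable.add h1 hw.2
  refine Integrable.mono' h2 hw.1 (ae_of_all _ fun x => ?_)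
  nlinarith [sq_nonneg (‖w x‖ - 1)]

lemma SqIntOn.integrable_rePart {w : ℝ → ℂ} (hw : SqIntOn w) : Integrable (rePart w) :=
  IntegrableOn.integrable_indicator hw.integrableOn.re measurableSet_Ioc

lemma SqIntOn.integrable_imPart {w : ℝ → ℂ} (hw : SqIntOn w) : Integrable (imPart w) :=
  IntegrableOn.integrable_indicator hw.integrableOn.im measurableSet_Ioc

lemma rePart_zero (w : ℝ → ℂ) : ∀ x ∉ Ioc (0:ℝ) 1, rePart w x = 0 :=
  fun _ hx => indicator_of_notMem hx _

lemma imPart_zero (w : ℝ → ℂ) : ∀ x ∉ Ioc (0:ℝ) 1, imPart w x = 0 :=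
  fun _ hx => indicator_of_notMem hx _

lemma eq_rePart_add_imPart (w : ℝ → ℂ) {x : ℝ} (hx : x ∈ Ioc (0:ℝ) 1) :
    w x = (rePart w x : ℂ) + (imPart w x : ℂ) * Complex.I := by
  rw [rePart, imPart, indicator_of_mem hx, indicator_of_mem hx, Complex.re_add_im]

/-- The complex fractional integral splits into real and imaginary parts wherever the defining
integrals converge absolutely. -/
lemma fracInt_ae_eq {α : ℝ} (hα : α ∈ Ioo (0:ℝ) 1) {w : ℝ → ℂ} (hw : SqIntOn w) :
    ∀ᵐ x : ℝ, x ∈ Ioc (0:ℝ) 1 → fracInt α w x =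
      (((Real.Gamma α)⁻¹ * rlInt α (rePart w) x : ℝ) : ℂ) +
      (((Real.Gamma α)⁻¹ * rlInt α (imPart w) x : ℝ) : ℂ) * Complex.I := by
  have h1 : 1 - α < 1 := by linarith [hα.1]
  filter_upwards [ae_integrable_abelKer_mul h1 hw.integrable_rePart (rePart_zero w),
    ae_integrable_abelKer_mul h1 hw.integrable_imPart (imPart_zero w)] with x hr hi hx
  have ir := (hr hx).ofReal (𝕜 := ℂ)
  have ii := ((hi hx).ofReal (𝕜 := ℂ)).mul_const Complex.I
  rw [fracInt, if_neg hα.1.ne', rlInt, rlInt, indicator_of_mem hx, indicator_of_mem hx]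
  have e : ∫ p in (0:ℝ)..x, (((x - p) ^ (α - 1) : ℝ) : ℂ) * w p =
      ∫ p, (((abelKer (1 - α) x p * rePart w p : ℝ) : ℂ) +
        ((abelKer (1 - α) x p * imPart w p : ℝ) : ℂ) * Complex.I) := by
    rw [intervalIntegral.integral_of_le hx.1.le, integral_Ioc_eq_integral_Ioo,
      ← integral_indicator measurableSet_Ioo]
    refine integral_congr_ae (ae_of_all _ fun p => ?_)
    simp only
    by_cases hp : p ∈ Ioc (0:ℝ) 1
    · by_cases hpx : p < x
      · rw [indicator_of_mem (show p ∈ Ioo 0 x from ⟨hp.1, hpx⟩), abelKer, if_pos hpx, neg_sub,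
          eq_rePart_add_imPart w hp]
        push_cast
        ring
      · rw [indicator_of_notMem (fun h : p ∈ Ioo 0 x => hpx h.2), abelKer, if_neg hpx]
        simp
    · rw [indicator_of_notMem (fun h : p ∈ Ioo 0 x => hp ⟨h.1, h.2.le.trans hx.2⟩),
        rePart_zero w p hp, imPart_zero w p hp]
      simp
  have e2 : ∫ p, (((abelKer (1 - α) x p * rePart w p : ℝ) : ℂ) +
        ((abelKer (1 - α) x p * imPart w p : ℝ) : ℂ) * Complex.I) =
      ((∫ p, abelKer (1 - α) x p * rePart w p : ℝ) : ℂ) +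
      ((∫ p, abelKer (1 - α) x p * imPart w p : ℝ) : ℂ) * Complex.I := by
    refine (integral_add ir ii).trans ?_
    rw [integral_mul_const]
    exact congrArg₂ (fun a b : ℂ => a + b * Complex.I) integral_complex_ofReal
      integral_complex_ofReal
  rw [e, e2, Complex.real_smul]
  push_cast
  ring

lemma InGraphA.eq_sol {α : ℝ} (hα : α ∈ Ioo (0:ℝ) 1) {u w : ℝ → ℂ} (h : InGraphA α u w) {x : ℝ}
    (hx : x ∈ Icc (0:ℝ) 1) :
    u x = ⟨sol α (u 0).re (rePart w) x, sol α (u 0).im (imPart w) x⟩ := by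
  have hw := h.2.1
  have ir := (integrable_rlInt hα.1 hw.integrable_rePart (rePart_zero w)).const_mul
    (Real.Gamma α)⁻¹
  have ii := (integrable_rlInt hα.1 hw.integrable_imPart (imPart_zero w)).const_mul
    (Real.Gamma α)⁻¹
  have e : ∫ t in (0:ℝ)..x, fracInt α w t = ∫ t in (0:ℝ)..x,
      ((((Real.Gamma α)⁻¹ * rlInt α (rePart w) t : ℝ) : ℂ) +
      (((Real.Gamma α)⁻¹ * rlInt α (imPart w) t : ℝ) : ℂ) * Complex.I) := by
    refine intervalIntegral.integral_congr_ae ?_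
    filter_upwards [fracInt_ae_eq hα hw] with t ht htx
    rw [uIoc_of_le hx.1] at htx
    exact ht ⟨htx.1, htx.2.trans hx.2⟩
  have e2 : ∫ t in (0:ℝ)..x,
      ((((Real.Gamma α)⁻¹ * rlInt α (rePart w) t : ℝ) : ℂ) +
      (((Real.Gamma α)⁻¹ * rlInt α (imPart w) t : ℝ) : ℂ) * Complex.I) =
      ((∫ t in (0:ℝ)..x, (Real.Gamma α)⁻¹ * rlInt α (rePart w) t : ℝ) : ℂ) +
      ((∫ t in (0:ℝ)..x, (Real.Gamma α)⁻¹ * rlInt α (imPart w) t : ℝ) : ℂ) * Complex.I := by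
    rw [← intervalIntegral.integral_ofReal, ← intervalIntegral.integral_ofReal,
      ← intervalIntegral.integral_mul_const]
    exact intervalIntegral.integral_add (ir.ofReal (𝕜 := ℂ)).intervalIntegrable
      ((ii.ofReal (𝕜 := ℂ)).mul_const Complex.I).intervalIntegrable
  rw [h.2.2.2 x hx, e, e2, sol, sol, prim, prim]
  apply Complex.ext <;> simp

lemma InGraphA.isSol {α : ℝ} (hα : α ∈ Ioo (0:ℝ) 1) {u w : ℝ → ℂ} (h : InGraphA α u w) :
    IsSol α (u 0).re (rePart w) ∧ IsSol α (u 0).im (imPart w) := by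
  have hw := h.2.1
  have h1 := h.eq_sol hα (x := 1) (by simp)
  rw [h.1] at h1
  have z := Complex.ext_iff.1 h1
  refine ⟨⟨hw.integrable_rePart, rePart_zero w, ?_, ?_, z.1.symm⟩,
    ⟨hw.integrable_imPart, imPart_zero w, ?_, ?_, z.2.symm⟩⟩
  · exact (integrable_rlInt hα.1 hw.integrable_rePart (rePart_zero w)).const_mul _
  · exact fun x hx => by rw [rlInt_zero _ _ x hx, mul_zero]
  · exact (integrable_rlInt hα.1 hw.integrable_imPart (imPart_zero w)).const_mul _
  · exact fun x hx => by rw [rlInt_zero _ _ x hx, mul_zero]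

/-- The sesquilinear form splits into the two real forms; only the values of `p` on `[0,1]`
matter, so `p` may be replaced by a global extension `q`. -/
lemma re_form_eq {p q : ℝ → ℝ} (hpq : EqOn p q (Icc 0 1)) (hq : Continuous q) {u w : ℝ → ℂ}
    (hw : SqIntOn w) {R J : ℝ → ℝ} (hR : Continuous R) (hJ : Continuous J)
    (hu : ∀ x ∈ Icc (0:ℝ) 1, u x = ⟨R x, J x⟩) :
    (∫ x in (0:ℝ)..1, (-((p x : ℝ) : ℂ) * w x) * (starRingEnd ℂ) (u x)).re =
      (∫ x in (0:ℝ)..1, -(q x * rePart w x * R x)) +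
      ∫ x in (0:ℝ)..1, -(q x * imPart w x * J x) := by
  have ib : ∀ (f g : ℝ → ℝ), Integrable f → Continuous g →
      IntervalIntegrable (fun x => -(q x * f x * g x)) volume 0 1 := by
    intro f g hf hg
    refine ((hf.intervalIntegrable (a := 0) (b := 1)).mul_continuousOn
      (hq.mul hg).continuousOn).neg.congr (fun x _ => ?_)
    simp only [Pi.neg_apply, Pi.mul_apply]
    ring
  have irR := ib _ _ hw.integrable_rePart hR
  have irJ := ib _ _ hw.integrable_rePart hJ
  have iiR := ib _ _ hw.integrable_imPart hR
  have iiJ := ib _ _ hw.integrable_imPart hJ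
  rw [← intervalIntegral.integral_add irR iiJ]
  have e : ∫ x in (0:ℝ)..1, (-((p x : ℝ) : ℂ) * w x) * (starRingEnd ℂ) (u x) =
      ∫ x in (0:ℝ)..1,
        (((-(q x * rePart w x * R x) + -(q x * imPart w x * J x) : ℝ) : ℂ) +
        ((-(q x * imPart w x * R x) - -(q x * rePart w x * J x) : ℝ) : ℂ) * Complex.I) := by
    rw [intervalIntegral.integral_of_le zero_le_one, intervalIntegral.integral_of_le zero_le_one]
    refine setIntegral_congr_fun measurableSet_Ioc fun x hx => ?_
    have hx' := Ioc_subset_Icc_self hx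
    rw [hpq hx', hu x hx', eq_rePart_add_imPart w hx]
    apply Complex.ext <;> simp <;> ring
  have oR : ∀ f : ℝ → ℝ, IntervalIntegrable f volume 0 1 →
      IntervalIntegrable (fun x => ((f x : ℝ) : ℂ)) volume 0 1 := fun f h =>
    ⟨Integrable.ofReal (𝕜 := ℂ) h.1, Integrable.ofReal (𝕜 := ℂ) h.2⟩
  have i1 := oR _ (irR.add iiJ)
  have i2 := (oR _ (iiR.sub irJ)).mul_const Complex.I
  rw [e]
  have e2 := intervalIntegral.integral_add i1 i2
  rw [intervalIntegral.integral_mul_const, intervalIntegral.integral_ofReal,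
    intervalIntegral.integral_ofReal] at e2
  have e3 := congrArg Complex.re e2
  simp only [Complex.add_re, Complex.ofReal_re, Complex.mul_re, Complex.I_re, Complex.I_im,
    Complex.ofReal_im, mul_zero, zero_mul, sub_zero, add_zero] at e3
  exact e3

lemma L2normSq_eq {u : ℝ → ℂ} {R J : ℝ → ℝ} (hR : Continuous R) (hJ : Continuous J)
    (hu : ∀ x ∈ Icc (0:ℝ) 1, u x = ⟨R x, J x⟩) : L2normSq u = mass R + mass J := by
  have h1 : Continuous fun x => R x ^ 2 := hR.pow 2
  have h2 : Continuous fun x => J x ^ 2 := hJ.pow 2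
  rw [mass, mass, ← intervalIntegral.integral_add (h1.intervalIntegrable _ _)
    (h2.intervalIntegrable _ _), L2normSq]
  refine intervalIntegral.integral_congr fun x hx => ?_
  rw [uIcc_of_le zero_le_one] at hx
  rw [hu x hx, Complex.sq_norm, Complex.normSq_apply]
  ring

/-- Garding-type coercivity for A1 u = p (d/dx)D^a u, with constants
depending only on a, delta, the Lipschitz constant K and the bound M on |p|. -/
theorem statement_8 (α δ K M : ℝ) (hα : α ∈ Set.Ioo (0:ℝ) 1) (hδ : 0 < δ)
    (hK : 0 ≤ K) (hM : 0 ≤ M) :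
    ∃ c' > (0:ℝ), ∃ cbar > (0:ℝ),
      ∀ p : ℝ → ℝ, LipschitzOnWith (Real.toNNReal K) p (Set.Icc (0:ℝ) 1) →
        (∀ x ∈ Set.Icc (0:ℝ) 1, δ ≤ p x) → (∀ x ∈ Set.Icc (0:ℝ) 1, |p x| ≤ M) →
        ∀ u w : ℝ → ℂ, InGraphA α u w →
          c' * sobNormSq ((1 + α) / 2) u - cbar * L2normSq u ≤
            (∫ x in (0:ℝ)..1, (-((p x : ℝ) : ℂ) * w x) * (starRingEnd ℂ) (u x)).re := by
  obtain ⟨C, hC, hG⟩ := exists_garding_real hα hδ K.toNNReal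
  have hf := formConst_pos hα
  set f := formConst α
  refine ⟨δ / (8 * f), by positivity, δ / (8 * f) + C / f, by positivity, ?_⟩
  intro p hp hpδ _ u w h
  obtain ⟨q, hq, hpq⟩ := hp.extend_real
  obtain ⟨sR, sJ⟩ := h.isSol hα
  have hu := fun x hx => h.eq_sol hα (x := x) hx
  have hqδ : ∀ x ∈ Icc (0:ℝ) 1, δ ≤ q x := fun x hx => hpq hx ▸ hpδ x hx
  have gR := hG q hq hqδ _ _ sR
  have gJ := hG q hq hqδ _ _ sJ
  have hsob := sobSeminormSq_le sR.continuous sJ.continuous hu (sR.integrableOn_energy hα)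
    (sJ.integrableOn_energy hα)
  rw [re_form_eq hpq hq.continuous h.2.1 sR.continuous sJ.continuous hu, sobNormSq]
  have hL := L2normSq_eq sR.continuous sJ.continuous hu
  set L := L2normSq u
  set S := sobSeminormSq ((1 + α) / 2) u
  set ER := energy α (sol α (u 0).re (rePart w))
  set EJ := energy α (sol α (u 0).im (imPart w))
  set X := ∫ x in (0:ℝ)..1, -(q x * rePart w x * sol α (u 0).re (rePart w) x)
  set Y := ∫ x in (0:ℝ)..1, -(q x * imPart w x * sol α (u 0).im (imPart w) x)
  have tot : δ / 4 * (ER + EJ) ≤ f * (X + Y) + C * L := by rw [hL]; linarith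
  have h2 : δ / 8 * S ≤ f * (X + Y) + C * L := by nlinarith
  calc δ / (8 * f) * (L + S) - (δ / (8 * f) + C / f) * L = (δ / 8 * S - C * L) / f := by
        field_simp
        ring
    _ ≤ X + Y := by
        rw [div_le_iff₀ hf]
        linarith
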